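/- Let M be a reduced G-perfect R-module of G-dimension n and let N be an R-module of finite flat dimension or finite injective dimension. Then: (i) Tor^R_i(Ext^n_R(M,R), N) ≅ Ext^{n−i}_R(M,N) for 0 ≤ i < n, and Tor^R_i(Ext^n_R(M,R), N) ≅ Tor^R_{i−n}(λM, N) for i > n; (ii) Ext^i_R(Ext^n_R(M,R), N) ≅ Tor^R_{n−i}(M,N) for 0 ≤ i < n, and Ext^i_R(Ext^n_R(M,R), N) ≅ Ext^{i−n}_R(λM, N) for i > n. -/

import Mathlib

open CategoryTheory

noncomputable section

universe u

/-- The `i`-th Ext group `Ext^i_R(M,N)`, as a type (with its `R`-module structure). -/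
abbrev extM (R : Type u) [CommRing R] (i : ℕ) (M N : Type u) [AddCommGroup M] [Module R M]
    [AddCommGroup N] [Module R N] : Type u :=
  ((Ext R (ModuleCat.{u} R) i).obj (Opposite.op (ModuleCat.of R M))).obj (ModuleCat.of R N)

/-- The `i`-th Tor group `Tor^R_i(M,N)`, as a type. -/
abbrev torM (R : Type u) [CommRing R] (i : ℕ) (M N : Type u) [AddCommGroup M] [Module R M]
    [AddCommGroup N] [Module R N] : Type u :=
  ((Tor (ModuleCat.{u} R) i).obj (ModuleCat.of R M)).obj (ModuleCat.of R N)

/-- The `i`-th local cohomology `H^i_I(M)`, as a type. -/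
abbrev locCoh (R : Type u) [CommRing R] (I : Ideal R) (i : ℕ) (M : Type u) [AddCommGroup M]
    [Module R M] : Type u :=
  (localCohomology I i).obj (ModuleCat.of R M)

/-- A submodule `N ≤ M` is superfluous if `K ⊔ N = ⊤` implies `K = ⊤`. -/
def Submodule.IsSuperfluous {R M : Type u} [CommRing R] [AddCommGroup M] [Module R M]
    (N : Submodule R M) : Prop :=
  ∀ K : Submodule R M, K ⊔ N = ⊤ → K = ⊤

/-- A minimal projective resolution of `M` by finitely generated projective modules:
each `P i → Ω^i M` is a projective cover (i.e. has superfluous kernel). -/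
structure MinRes (R : Type u) [CommRing R] (M : Type u) [AddCommGroup M] [Module R M] where
  P : ℕ → ModuleCat.{u} R
  projective : ∀ i, Module.Projective R (P i)
  finite : ∀ i, Module.Finite R (P i)
  d : (i : ℕ) → (↥(P (i + 1)) →ₗ[R] ↥(P i))
  ε : ↥(P 0) →ₗ[R] M
  surj : Function.Surjective ε
  exact0 : LinearMap.range (d 0) = LinearMap.ker ε
  exact : ∀ i, LinearMap.range (d (i + 1)) = LinearMap.ker (d i)
  min_eps : (LinearMap.ker ε).IsSuperfluous
  min_d : ∀ i, (LinearMap.ker (d i)).IsSuperfluous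

namespace MinRes

variable {R M : Type u} [CommRing R] [AddCommGroup M] [Module R M]

/-- `T k F` is the Auslander-Bridger transpose `𝒯_{k+1} M = Tr Ω^k M`, computed as the
cokernel of `P_k* → P_{k+1}*`. -/
def T (F : MinRes R M) (k : ℕ) : Type u :=
  (Module.Dual R ↥(F.P (k + 1))) ⧸ LinearMap.range (F.d k).dualMap

instance (F : MinRes R M) (k : ℕ) : AddCommGroup (F.T k) :=
  inferInstanceAs (AddCommGroup ((Module.Dual R ↥(F.P (k + 1))) ⧸
    LinearMap.range (F.d k).dualMap))

instance (F : MinRes R M) (k : ℕ) : Module R (F.T k) :=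
  inferInstanceAs (Module R ((Module.Dual R ↥(F.P (k + 1))) ⧸
    LinearMap.range (F.d k).dualMap))

/-- The transpose `Tr M = coker(P₀* → P₁*)` computed from a minimal projective presentation. -/
abbrev Tr (F : MinRes R M) : Type u := F.T 0

/-- `λM = ΩTr M`, realized as the image of `P₀* → P₁*` for a minimal projective
presentation `P₁ → P₀ → M → 0`. -/
def lambdaMod (F : MinRes R M) : Type u :=
  ↥(LinearMap.range (F.d 0).dualMap)

instance (F : MinRes R M) : AddCommGroup F.lambdaMod :=
  inferInstanceAs (AddCommGroup ↥(LinearMap.range (F.d 0).dualMap))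

instance (F : MinRes R M) : Module R F.lambdaMod :=
  inferInstanceAs (Module R ↥(LinearMap.range (F.d 0).dualMap))

end MinRes

/-- `M` is a horizontally linked `R`-module, i.e. `M ≅ λλM`. -/
def IsHorizontallyLinked (R : Type u) [CommRing R] (M : Type u) [AddCommGroup M]
    [Module R M] : Prop :=
  ∃ (F : MinRes R M) (G : MinRes R F.lambdaMod), Nonempty (G.lambdaMod ≃ₗ[R] M)

/-- `M` and `N` are horizontally linked to each other: `M ≅ λN` and `N ≅ λM`. -/
def MutuallyLinked (A : Type u) [CommRing A] (M N : Type u) [AddCommGroup M] [Module A M]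
    [AddCommGroup N] [Module A N] : Prop :=
  ∃ (F : MinRes A M) (G : MinRes A N),
    Nonempty (F.lambdaMod ≃ₗ[A] N) ∧ Nonempty (G.lambdaMod ≃ₗ[A] M)

/-- `M` is linked to `N` by the ideal `c`: `c` annihilates both modules and they are
horizontally linked to each other as `R ⧸ c`-modules. -/
def LinkedBy (R : Type u) [CommRing R] (c : Ideal R) (M N : Type u) [AddCommGroup M]
    [Module R M] [AddCommGroup N] [Module R N] : Prop :=
  ∃ (hM : Module.IsTorsionBySet R M c) (hN : Module.IsTorsionBySet R N c),
    letI := hM.module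
    letI := hN.module
    MutuallyLinked (R ⧸ c) M N

/-- A stable module: no nonzero projective direct summand. -/
def IsStableModule (R : Type u) [CommRing R] (M : Type u) [AddCommGroup M] [Module R M] : Prop :=
  ∀ N : Submodule R M, Module.Projective R ↥N → (∃ N' : Submodule R M, IsCompl N N') → N = ⊥

/-- `M` has G-dimension zero: `M` is finitely generated and reflexive,
and `Ext^i(M,R) = 0 = Ext^i(M*,R)` for all `i > 0`. -/
def IsGDimZero (R : Type u) [CommRing R] (M : Type u) [AddCommGroup M] [Module R M] : Prop :=
  Module.Finite R M ∧ Function.Bijective (Module.Dual.eval R M) ∧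
    (∀ i : ℕ, 0 < i → Subsingleton (extM R i M R)) ∧
    (∀ i : ℕ, 0 < i → Subsingleton (extM R i (Module.Dual R M) R))

/-- `M` admits a resolution of length `≤ n` by modules of G-dimension zero. -/
def GDimLE (R : Type u) [CommRing R] : ℕ → ModuleCat.{u} R → Prop
  | 0, M => IsGDimZero R ↥M
  | n + 1, M =>
    ∃ (G : ModuleCat.{u} R) (f : ↥G →ₗ[R] ↥M), IsGDimZero R ↥G ∧ Function.Surjective f ∧
      GDimLE R n (ModuleCat.of R ↥(LinearMap.ker f))

/-- The G-dimension of `M`: the minimal length of a resolution of `M` by modules of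
G-dimension zero (`∞` if there is none). -/
def GDim (R : Type u) [CommRing R] (M : Type u) [AddCommGroup M] [Module R M] : ℕ∞ :=
  sInf {n : ℕ∞ | ∃ k : ℕ, n = k ∧ GDimLE R k (ModuleCat.of R M)}

/-- The reduced grade of `M`: `rgr M = inf{ i > 0 | Ext^i(M,R) ≠ 0 }`. -/
def rgr (R : Type u) [CommRing R] (M : Type u) [AddCommGroup M] [Module R M] : ℕ∞ :=
  sInf {n : ℕ∞ | ∃ k : ℕ, n = k ∧ 0 < k ∧ ¬ Subsingleton (extM R k M R)}

/-- The grade of `M`: `gr M = inf{ i ≥ 0 | Ext^i(M,R) ≠ 0 }`. -/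
def egrade (R : Type u) [CommRing R] (M : Type u) [AddCommGroup M] [Module R M] : ℕ∞ :=
  sInf {n : ℕ∞ | ∃ k : ℕ, n = k ∧ ¬ Subsingleton (extM R k M R)}

/-- `depth_I(M) = inf{ i | Ext^i(R/I, M) ≠ 0 }`; for `I` the maximal ideal of a
local ring this is the depth of `M`. -/
def edepth (R : Type u) [CommRing R] (I : Ideal R) (M : Type u) [AddCommGroup M]
    [Module R M] : ℕ∞ :=
  sInf {n : ℕ∞ | ∃ k : ℕ, n = k ∧ ¬ Subsingleton (extM R k (R ⧸ I) M)}

/-- The depth of the local ring `R`. -/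
def rdepth (R : Type u) [CommRing R] [IsLocalRing R] : ℕ∞ :=
  edepth R (IsLocalRing.maximalIdeal R) R

/-- `depth_{R_p}(M_p)`. -/
def locDepth (R : Type u) [CommRing R] (p : Ideal R) [p.IsPrime] (M : Type u) [AddCommGroup M]
    [Module R M] : ℕ∞ :=
  edepth (Localization.AtPrime p) (IsLocalRing.maximalIdeal (Localization.AtPrime p))
    (LocalizedModule p.primeCompl M)

/-- `depth R_p`. -/
def locRingDepth (R : Type u) [CommRing R] (p : Ideal R) [p.IsPrime] : ℕ∞ :=
  rdepth (Localization.AtPrime p)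

/-- `Gdim_{R_p}(M_p)`. -/
def locGDim (R : Type u) [CommRing R] (p : Ideal R) [p.IsPrime] (M : Type u) [AddCommGroup M]
    [Module R M] : ℕ∞ :=
  GDim (Localization.AtPrime p) (LocalizedModule p.primeCompl M)

/-- `rgr_{R_p}(M_p)`. -/
def locRgr (R : Type u) [CommRing R] (p : Ideal R) [p.IsPrime] (M : Type u) [AddCommGroup M]
    [Module R M] : ℕ∞ :=
  rgr (Localization.AtPrime p) (LocalizedModule p.primeCompl M)

/-- `dim_{R_p}(M_p)`, the Krull dimension of the support of `M_p` over `R_p`. -/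
def locDim (R : Type u) [CommRing R] (p : Ideal R) [p.IsPrime] (M : Type u) [AddCommGroup M]
    [Module R M] : WithBot ℕ∞ :=
  ringKrullDim ((Localization.AtPrime p) ⧸
    Module.annihilator (Localization.AtPrime p) (LocalizedModule p.primeCompl M))

/-- `M` satisfies the condition `S̃_k`: `depth_{R_p}(M_p) ≥ min{k, depth R_p}` for all primes. -/
def Stilde (R : Type u) [CommRing R] (k : ℕ) (M : Type u) [AddCommGroup M] [Module R M] : Prop :=
  ∀ (p : Ideal R) (_ : p.IsPrime), min (k : ℕ∞) (locRingDepth R p) ≤ locDepth R p M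

/-- `M` satisfies Serre's condition `(S_k)`:
`depth_{R_p}(M_p) ≥ min{k, dim_{R_p}(M_p)}` for all primes. -/
def SerreS (R : Type u) [CommRing R] (k : ℕ) (M : Type u) [AddCommGroup M] [Module R M] : Prop :=
  ∀ (p : Ideal R) (_ : p.IsPrime),
    min (k : WithBot ℕ∞) (locDim R p M) ≤ (locDepth R p M : WithBot ℕ∞)

/-- `M` is a `k`-th syzygy module. -/
def IsKthSyzygy (R : Type u) [CommRing R] : ℕ → ModuleCat.{u} R → Prop
  | 0, _ => True
  | k + 1, M =>
    ∃ (P : ModuleCat.{u} R) (f : ↥M →ₗ[R] ↥P), Module.Projective R ↥P ∧ Module.Finite R ↥P ∧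
      Function.Injective f ∧ IsKthSyzygy R k (ModuleCat.of R (↥P ⧸ LinearMap.range f))

/-- The `I`-torsion submodule `Γ_I(M) = { x | I^n x = 0 for some n }`. -/
def gammaTorsion (R : Type u) [CommRing R] (I : Ideal R) (M : Type u) [AddCommGroup M]
    [Module R M] : Submodule R M where
  carrier := {x | ∃ n : ℕ, ∀ a ∈ I ^ n, a • x = 0}
  zero_mem' := ⟨0, fun a _ => smul_zero a⟩
  add_mem' := by
    rintro x y ⟨n, hn⟩ ⟨m, hm⟩
    exact ⟨n + m, fun a ha => by
      rw [smul_add, hn a (Ideal.pow_le_pow_right (Nat.le_add_right n m) ha),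
        hm a (Ideal.pow_le_pow_right (Nat.le_add_left m n) ha), add_zero]⟩
  smul_mem' := by
    rintro c x ⟨n, hn⟩
    exact ⟨n, fun a ha => by rw [smul_comm, hn a ha, smul_zero]⟩

/-- `N` has finite flat dimension (characterized by uniform vanishing of `Tor`). -/
def HasFiniteFlatDim (R : Type u) [CommRing R] (N : Type u) [AddCommGroup N] [Module R N] : Prop :=
  ∃ n : ℕ, ∀ i : ℕ, n < i → ∀ (M : ModuleCat.{u} R), Subsingleton (torM R i ↥M N)

/-- `N` has finite injective dimension (characterized by uniform vanishing of `Ext`). -/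
def HasFiniteInjDim (R : Type u) [CommRing R] (N : Type u) [AddCommGroup N] [Module R N] : Prop :=
  ∃ n : ℕ, ∀ i : ℕ, n < i → ∀ (M : ModuleCat.{u} R), Subsingleton (extM R i ↥M N)

/-- `K` is a semidualizing `R`-module. -/
def IsSemidualizing (R : Type u) [CommRing R] (K : Type u) [AddCommGroup K] [Module R K] : Prop :=
  Module.Finite R K ∧ Function.Bijective (LinearMap.lsmul R K) ∧
    ∀ i : ℕ, 0 < i → Subsingleton (extM R i K K)

/-- The biduality map `M → Hom(Hom(M,K),K)`. -/
def evalK (R : Type u) [CommRing R] (K M : Type u) [AddCommGroup K] [Module R K]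
    [AddCommGroup M] [Module R M] : M →ₗ[R] ((M →ₗ[R] K) →ₗ[R] K) :=
  LinearMap.applyₗ

/-- `M` has `G_K`-dimension zero. -/
def IsGKDimZero (R : Type u) [CommRing R] (K M : Type u) [AddCommGroup K] [Module R K]
    [AddCommGroup M] [Module R M] : Prop :=
  Module.Finite R M ∧ Function.Bijective (evalK R K M) ∧
    (∀ i : ℕ, 0 < i → Subsingleton (extM R i M K)) ∧
    (∀ i : ℕ, 0 < i → Subsingleton (extM R i (M →ₗ[R] K) K))

/-- `M` admits a resolution of length `≤ n` by modules of `G_K`-dimension zero. -/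
def GKDimLE (R : Type u) [CommRing R] (K : Type u) [AddCommGroup K] [Module R K] :
    ℕ → ModuleCat.{u} R → Prop
  | 0, M => IsGKDimZero R K ↥M
  | n + 1, M =>
    ∃ (G : ModuleCat.{u} R) (f : ↥G →ₗ[R] ↥M), IsGKDimZero R K ↥G ∧ Function.Surjective f ∧
      GKDimLE R K n (ModuleCat.of R ↥(LinearMap.ker f))

/-- The `G_K`-dimension of `M`. -/
def GKDim (R : Type u) [CommRing R] (K M : Type u) [AddCommGroup K] [Module R K]
    [AddCommGroup M] [Module R M] : ℕ∞ :=
  sInf {n : ℕ∞ | ∃ k : ℕ, n = k ∧ GKDimLE R K k (ModuleCat.of R M)}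

/-- The grade of a module, `gr_R(M) = grade(Ann_R(M), R) = inf{i | Ext^i(R/Ann M, R) ≠ 0}`. -/
def grAnn (R : Type u) [CommRing R] (M : Type u) [AddCommGroup M] [Module R M] : ℕ∞ :=
  egrade R (R ⧸ Module.annihilator R M)

/-- The grade of an ideal, `grade(I) = inf{i | Ext^i(R/I, R) ≠ 0}`. -/
def gradeI (R : Type u) [CommRing R] (I : Ideal R) : ℕ∞ :=
  egrade R (R ⧸ I)

/-- The ideal `I` is `G_K`-Gorenstein: `R/I` is `G_K`-perfect and `Ext^{gr I}(R/I, K)` is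
cyclic. -/
def IsGKGorensteinIdeal (R : Type u) [CommRing R] (K : Type u) [AddCommGroup K] [Module R K]
    (I : Ideal R) : Prop :=
  ∃ n : ℕ, grAnn R (R ⧸ I) = (n : ℕ∞) ∧ GKDim R K (R ⧸ I) = (n : ℕ∞) ∧
    ∃ x : extM R n (R ⧸ I) K, Submodule.span R {x} = ⊤

end

universe v w

noncomputable section

open Limits

/-- A minimal delta-functor interface. -/
structure Delta {R : Type u} [CommRing R] {A : Type w} [Category.{v} A] [Abelian A]
    (Φ : ModuleCat.{u} R ⥤ A) [Φ.Additive] where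
  T : ℕ → ModuleCat.{u} R → A
  zero : ∀ X, Nonempty (T 0 X ≅ Φ.obj X)
  proj : ∀ (X : ModuleCat.{u} R), Module.Projective R X → ∀ i, IsZero (T (i + 1) X)
  rex : ∀ S : ShortComplex (ModuleCat.{u} R), S.Exact → Epi S.g →
    (S.map Φ).Exact ∧ Epi (Φ.map S.g)
  shift : ∀ (S : ShortComplex (ModuleCat.{u} R)), S.ShortExact → ∀ i,
    IsZero (T (i + 1) S.X₂) → IsZero (T (i + 2) S.X₂) → Nonempty (T (i + 2) S.X₃ ≅ T (i + 1) S.X₁)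
  one : ∀ (S : ShortComplex (ModuleCat.{u} R)), S.ShortExact → IsZero (T 1 S.X₂) →
    ∃ (δ : T 1 S.X₃ ⟶ Φ.obj S.X₁) (w : δ ≫ Φ.map S.f = 0),
      Mono δ ∧ (ShortComplex.mk δ _ w).Exact

/-- chains of syzygies -/
structure Chain (R : Type u) [CommRing R] where
  X : ℕ → ModuleCat.{u} R
  P : ℕ → ModuleCat.{u} R
  ι : ∀ j, X (j + 1) ⟶ P j
  π : ∀ j, P j ⟶ X j
  w : ∀ j, ι j ≫ π j = 0
  se : ∀ j, (ShortComplex.mk (ι j) (π j) (w j)).ShortExact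
  proj : ∀ j, Module.Projective R (P j)
  d : ∀ j, P (j + 1) →ₗ[R] P j
  fac : ∀ j, π (j + 1) ≫ ι j = ModuleCat.ofHom (d j)

section
variable {R : Type u} [CommRing R] {A : Type w} [Category.{v} A] [Abelian A]
    {Φ : ModuleCat.{u} R ⥤ A} [Φ.Additive]

lemma homKaux {X Y I Z H : A} (a : X ⟶ Y) (p : Y ⟶ I) (q : I ⟶ Z) (hab : a ≫ p ≫ q = 0)
    (h0 : a ≫ p = 0) (hex : (ShortComplex.mk a p h0).Exact) (hp : Epi p)
    (k : H ⟶ I) (hk : k ≫ q = 0) (hkm : Mono k) (hke : (ShortComplex.mk k _ hk).Exact) :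
    Nonempty ((ShortComplex.mk a (p ≫ q) hab).homology ≅ H) := by
  have : Epi (ShortComplex.mk a p h0).g := hp
  have : Mono (ShortComplex.mk k _ hk).f := hkm
  have hp := hex.gIsCokernel
  have hi := hke.fIsKernel
  have key : hp.desc (CokernelCofork.ofπ (p ≫ q) hab) = q :=
    Cofork.IsColimit.hom_ext hp (hp.fac (CokernelCofork.ofπ (p ≫ q) hab) WalkingParallelPair.one)
  let hd : (ShortComplex.mk a (p ≫ q) hab).RightHomologyData :=
    { Q := I
      H := H
      p := p
      ι := k
      wp := h0
      hp := hp
      wι := (congrArg (fun t => k ≫ t) key).trans hk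
      hι := by
        refine KernelFork.IsLimit.ofι _ _
          (fun l hl => hi.lift (KernelFork.ofι l ((congrArg (fun t => l ≫ t) key).symm.trans hl)))
          ?_ ?_
        · intro W l hl
          exact hi.fac (KernelFork.ofι l _) WalkingParallelPair.zero
        · intro W l hl m hm
          apply Fork.IsLimit.hom_ext hi
          refine Eq.trans hm ?_
          exact (hi.fac (KernelFork.ofι l
            ((congrArg (fun t => l ≫ t) key).symm.trans hl)) WalkingParallelPair.zero).symm }
  exact ⟨hd.homologyIso⟩

lemma Delta.homK (Δ : Delta Φ) {X Y Z I : ModuleCat.{u} R} (a : X ⟶ Y) (b : Y ⟶ Z)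
    (hab : Φ.map a ≫ Φ.map b = 0)
    (π : Y ⟶ I) (ι : I ⟶ Z) (hb : π ≫ ι = b) (h0 : a ≫ π = 0) (hex : (ShortComplex.mk a π h0).Exact)
    (hπ : Epi π) {H : A} (k : H ⟶ Φ.obj I) (hk : k ≫ Φ.map ι = 0) (hkm : Mono k)
    (hke : (ShortComplex.mk k _ hk).Exact) :
    Nonempty ((ShortComplex.mk (Φ.map a) (Φ.map b) hab).homology ≅ H) := by
  subst hb
  obtain ⟨h1, h2⟩ := Δ.rex _ hex hπ
  have e := Φ.map_comp π ι
  have hab' : Φ.map a ≫ Φ.map π ≫ Φ.map ι = 0 := by rw [← e]; exact hab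
  have : ShortComplex.mk (Φ.map a) (Φ.map (π ≫ ι)) hab
    = ShortComplex.mk (Φ.map a) (Φ.map π ≫ Φ.map ι) hab' := by congr 1
  rw [this]
  exact homKaux _ _ _ hab' _ h1 h2 k hk hkm hke

lemma Delta.shiftChain (Δ : Delta Φ) (Q : Chain R) (j : ℕ) : ∀ (i k l : ℕ), k + j = l →
    Nonempty (Δ.T (i + 1 + j) (Q.X k) ≅ Δ.T (i + 1) (Q.X l)) := by
  induction j with
  | zero => intro i k l h; subst h; exact ⟨Iso.refl _⟩
  | succ j ih =>
    intro i k l h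
    obtain ⟨e⟩ := ih i (k + 1) l (by omega)
    obtain ⟨f⟩ := Δ.shift _ (Q.se k) (i + j) (Δ.proj _ (Q.proj k) _) (Δ.proj _ (Q.proj k) _)
    have h1 : i + 1 + (j + 1) = i + j + 2 := by omega
    have h2 : i + 1 + j = i + j + 1 := by omega
    rw [h1]; rw [h2] at e
    exact ⟨f ≪≫ e⟩

lemma Chain.dd (Q : Chain R) (j : ℕ) :
    ModuleCat.ofHom (Q.d (j + 1)) ≫ ModuleCat.ofHom (Q.d j) = 0 := by
  rw [← Q.fac, ← Q.fac]
  simp [reassoc_of% (Q.w (j + 1))]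

lemma Delta.res (Δ : Delta Φ) (Q : Chain R) (j : ℕ)
    (hab : Φ.map (ModuleCat.ofHom (Q.d (j + 1))) ≫ Φ.map (ModuleCat.ofHom (Q.d j)) = 0) :
    Nonempty ((ShortComplex.mk (Φ.map (ModuleCat.ofHom (Q.d (j + 1))))
      (Φ.map (ModuleCat.ofHom (Q.d j))) hab).homology ≅ Δ.T (j + 1) (Q.X 0)) := by
  obtain ⟨e⟩ := Δ.shiftChain Q j 0 0 j (by omega)
  rw [show 0 + 1 + j = j + 1 by omega] at e
  obtain ⟨δ, w, hm, hex⟩ := Δ.one _ (Q.se j) (Δ.proj _ (Q.proj j) _)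
  have hep : Epi (Q.π (j + 1)) := (Q.se (j + 1)).epi_g
  have hep2 : Epi (Q.π (j + 2)) := (Q.se (j + 2)).epi_g
  have h0 : ModuleCat.ofHom (Q.d (j + 1)) ≫ Q.π (j + 1) = 0 := by
    rw [← Q.fac, Category.assoc, Q.w, comp_zero]
  have hE : (ShortComplex.mk (ModuleCat.ofHom (Q.d (j + 1))) (Q.π (j + 1)) h0).Exact := by
    have h1 := (Q.se (j + 1)).exact
    rw [ShortComplex.moduleCat_exact_iff] at h1 ⊢
    intro x hx
    obtain ⟨y, hy⟩ := h1 x hx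
    obtain ⟨z, hz⟩ := (ModuleCat.epi_iff_surjective _).1 hep2 y
    refine ⟨z, ?_⟩
    have := congrArg (fun t => t.hom z) (Q.fac (j + 1))
    dsimp at this hy hz ⊢
    rw [← this, hz, hy]
  obtain ⟨f⟩ := Δ.homK (ModuleCat.ofHom (Q.d (j + 1))) (ModuleCat.ofHom (Q.d j)) hab (Q.π (j + 1))
    (Q.ι j) (Q.fac j) h0 hE hep δ w hm hex
  exact ⟨f ≪≫ e.symm⟩

end
end

noncomputable section

open Limits

lemma homCaux {A : Type w} [Category.{v} A] [Abelian A] {X Y K Z H : A} (a' : X ⟶ K) (i : K ⟶ Y)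
    (b : Y ⟶ Z) (hab : (a' ≫ i) ≫ b = 0)
    (h0 : i ≫ b = 0) (hex : (ShortComplex.mk i b h0).Exact) (hi : Mono i)
    (q : K ⟶ H) (hq : a' ≫ q = 0) (hqe : Epi q) (hqx : (ShortComplex.mk a' q hq).Exact) :
    Nonempty ((ShortComplex.mk (a' ≫ i) b hab).homology ≅ H) := by
  have : Mono (ShortComplex.mk i b h0).f := hi
  have : Epi (ShortComplex.mk a' q hq).g := hqe
  have hI := hex.fIsKernel
  have hC := hqx.gIsCokernel
  have key : hI.lift (KernelFork.ofι (a' ≫ i) hab) = a' :=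
    Fork.IsLimit.hom_ext hI (hI.fac (KernelFork.ofι (a' ≫ i) hab) WalkingParallelPair.zero)
  let hd : (ShortComplex.mk (a' ≫ i) b hab).LeftHomologyData :=
    { K := K
      H := H
      i := i
      π := q
      wi := h0
      hi := hI
      wπ := (congrArg (fun t => t ≫ q) key).trans hq
      hπ := by
        refine CokernelCofork.IsColimit.ofπ _ _
          (fun l hl => hC.desc (CokernelCofork.ofπ l ((congrArg (fun t => t ≫ l) key).symm.trans hl)))
          ?_ ?_
        · intro W l hl
          exact hC.fac (CokernelCofork.ofπ l _) WalkingParallelPair.one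
        · intro W l hl m hm
          apply Cofork.IsColimit.hom_ext hC
          refine Eq.trans hm ?_
          exact (hC.fac (CokernelCofork.ofπ l
            ((congrArg (fun t => t ≫ l) key).symm.trans hl)) WalkingParallelPair.one).symm }
  exact ⟨hd.homologyIso⟩

lemma exact_comp_mono' {A : Type w} [Category.{v} A] [Abelian A] {X Y Z W : A} (f : X ⟶ Y)
    (g : Y ⟶ Z) (h : Z ⟶ W) (hg : Y ⟶ W) (e : g ≫ h = hg) (w0 : f ≫ g = 0) (w1 : f ≫ hg = 0)
    (hh : Mono h) (hx : (ShortComplex.mk f g w0).Exact) : (ShortComplex.mk f hg w1).Exact := by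
  subst e
  let φ : ShortComplex.mk f g w0 ⟶ ShortComplex.mk f (g ≫ h) w1 :=
    { τ₁ := 𝟙 _, τ₂ := 𝟙 _, τ₃ := h }
  have : Epi φ.τ₁ := inferInstanceAs (Epi (𝟙 _))
  have : IsIso φ.τ₂ := inferInstanceAs (IsIso (𝟙 _))
  have : Mono φ.τ₃ := hh
  exact (ShortComplex.exact_iff_of_epi_of_isIso_of_mono φ).1 hx

lemma exact_epi_comp' {A : Type w} [Category.{v} A] [Abelian A] {X Y Z W : A} (f : X ⟶ Y)
    (g : Y ⟶ Z) (h : W ⟶ X) (hf : W ⟶ Y) (e : h ≫ f = hf) (w0 : f ≫ g = 0) (w1 : hf ≫ g = 0)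
    (hh : Epi h) (hx : (ShortComplex.mk f g w0).Exact) : (ShortComplex.mk hf g w1).Exact := by
  subst e
  let φ : ShortComplex.mk (h ≫ f) g w1 ⟶ ShortComplex.mk f g w0 :=
    { τ₁ := h, τ₂ := 𝟙 _, τ₃ := 𝟙 _ }
  have : Epi φ.τ₁ := hh
  have : IsIso φ.τ₂ := inferInstanceAs (IsIso (𝟙 _))
  have : Mono φ.τ₃ := inferInstanceAs (Mono (𝟙 _))
  exact (ShortComplex.exact_iff_of_epi_of_isIso_of_mono φ).2 hx

/-- a cochain complex of projectives -/
structure CoChain (R : Type u) [CommRing R] where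
  D : ℕ → ModuleCat.{u} R
  proj : ∀ j, Module.Projective R (D j)
  d : ∀ j, D j →ₗ[R] D (j + 1)
  dd : ∀ j, d (j + 1) ∘ₗ d j = 0

namespace CoChain
variable {R : Type u} [CommRing R] (C : CoChain R)

def B (j : ℕ) : ModuleCat.{u} R := ModuleCat.of R (LinearMap.range (C.d j))
def bι (j : ℕ) : C.B j ⟶ C.D (j + 1) := ModuleCat.ofHom (LinearMap.range (C.d j)).subtype
def bπ (j : ℕ) : C.D j ⟶ C.B j := ModuleCat.ofHom (LinearMap.rangeRestrict (C.d j))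
def EA (j : ℕ) : Prop := LinearMap.ker (C.d (j + 1)) ≤ LinearMap.range (C.d j)
def Z (j : ℕ) : ModuleCat.{u} R := ModuleCat.of R (LinearMap.ker (C.d j))
def zι (j : ℕ) : C.Z j ⟶ C.D j := ModuleCat.ofHom (LinearMap.ker (C.d j)).subtype

lemma ofHom_dd (j : ℕ) : ModuleCat.ofHom (C.d j) ≫ ModuleCat.ofHom (C.d (j + 1)) = 0 := by
  rw [← ModuleCat.ofHom_comp, C.dd]; rfl

lemma fac (j : ℕ) : C.bπ j ≫ C.bι j = ModuleCat.ofHom (C.d j) := rfl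

lemma epi_bπ (j : ℕ) : Epi (C.bπ j) := by
  rw [ModuleCat.epi_iff_surjective]
  exact LinearMap.surjective_rangeRestrict _

lemma dπ (j : ℕ) : ModuleCat.ofHom (C.d j) ≫ C.bπ (j + 1) = 0 := by
  ext x
  apply Subtype.ext
  exact LinearMap.congr_fun (C.dd j) x

lemma dπ_exact {j : ℕ} (h : C.EA j) : (ShortComplex.mk _ _ (C.dπ j)).Exact := by
  rw [ShortComplex.moduleCat_exact_iff]
  intro x hx
  exact h (congrArg Subtype.val hx)

lemma ιπ (j : ℕ) : C.bι j ≫ C.bπ (j + 1) = 0 := by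
  ext ⟨_, x, rfl⟩
  apply Subtype.ext
  exact LinearMap.congr_fun (C.dd j) x

lemma ses {j : ℕ} (h : C.EA j) : (ShortComplex.mk _ _ (C.ιπ j)).ShortExact := by
  refine ModuleCat.shortComplex_shortExact _ ?_ ?_ ?_
  · intro x
    constructor
    · intro hx
      exact ⟨⟨x, h (congrArg Subtype.val hx)⟩, rfl⟩
    · rintro ⟨⟨_, y, rfl⟩, rfl⟩
      apply Subtype.ext
      exact LinearMap.congr_fun (C.dd j) y
  · exact Subtype.val_injective
  · exact LinearMap.surjective_rangeRestrict _

lemma zπ (j : ℕ) : C.zι j ≫ C.bπ j = 0 := by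
  ext ⟨x, hx⟩
  apply Subtype.ext
  exact hx

lemma zses (j : ℕ) : (ShortComplex.mk _ _ (C.zπ j)).ShortExact := by
  refine ModuleCat.shortComplex_shortExact _ ?_ ?_ ?_
  · intro x
    constructor
    · intro hx
      exact ⟨⟨x, congrArg Subtype.val hx⟩, rfl⟩
    · rintro ⟨⟨y, hy⟩, rfl⟩
      apply Subtype.ext
      exact hy
  · exact Subtype.val_injective
  · exact LinearMap.surjective_rangeRestrict _

def inc (j : ℕ) : C.B j ⟶ C.Z (j + 1) := ModuleCat.ofHom (Submodule.inclusion (by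
  rintro _ ⟨x, rfl⟩; exact LinearMap.congr_fun (C.dd j) x))

end CoChain

section
variable {R : Type u} [CommRing R] {A : Type w} [Category.{v} A] [Abelian A]
    {Φ : ModuleCat.{u} R ⥤ A} [Φ.Additive] 

lemma CoChain.Φdd (Φ : ModuleCat.{u} R ⥤ A) [Φ.Additive] (C : CoChain R) (j : ℕ) :
    Φ.map (ModuleCat.ofHom (C.d j)) ≫ Φ.map (ModuleCat.ofHom (C.d (j + 1))) = 0 := by
  rw [← Φ.map_comp, C.ofHom_dd, Φ.map_zero]

/-- The short complex at degree j+1. -/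
abbrev CoChain.sc (Φ : ModuleCat.{u} R ⥤ A) [Φ.Additive] (C : CoChain R) (j : ℕ) :
    ShortComplex A := ShortComplex.mk _ _ (C.Φdd Φ j)

lemma Delta.HB (Δ : Delta Φ) (C : CoChain R) {j : ℕ} (hj : C.EA j) {H : A}
    (k : H ⟶ Φ.obj (C.B (j + 1))) (hk : k ≫ Φ.map (C.bι (j + 1)) = 0) (hkm : Mono k)
    (hke : (ShortComplex.mk k _ hk).Exact) :
    Nonempty ((C.sc Φ j).homology ≅ H) :=
  Δ.homK _ _ _ (C.bπ (j + 1)) (C.bι (j + 1)) (C.fac _) (C.dπ j) (C.dπ_exact hj)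
    (C.epi_bπ _) k hk hkm hke

lemma Delta.HT (Δ : Delta Φ) (C : CoChain R) {j : ℕ} (hj : C.EA j) (hj' : C.EA (j + 1)) :
    Nonempty ((C.sc Φ j).homology ≅ Δ.T 1 (C.B (j + 2))) := by
  obtain ⟨δ, w, hm, hex⟩ := Δ.one _ (C.ses hj') (Δ.proj _ (C.proj _) 0)
  exact Δ.HB C hj δ w hm hex

lemma Delta.SB (Δ : Delta Φ) (C : CoChain R) (k : ℕ) : ∀ (i j l : ℕ), j + k = l →
    (∀ t, j ≤ t → t < l → C.EA t) →
    Nonempty (Δ.T (i + 1 + k) (C.B l) ≅ Δ.T (i + 1) (C.B j)) := by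
  induction k with
  | zero => intro i j l h _; subst h; exact ⟨Iso.refl _⟩
  | succ k ih =>
    intro i j l h hE
    obtain rfl : l = j + k + 1 := by omega
    obtain ⟨e⟩ := ih i j (j + k) rfl (fun t h1 h2 => hE t h1 (by omega))
    obtain ⟨f⟩ := Δ.shift _ (C.ses (hE (j + k) (by omega) (by omega))) (i + k)
      (Δ.proj _ (C.proj _) _) (Δ.proj _ (C.proj _) _)
    have h1 : i + 1 + (k + 1) = i + k + 2 := by omega
    have h2 : i + 1 + k = i + k + 1 := by omega
    rw [h1]; rw [h2] at e
    exact ⟨f ≪≫ e⟩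

lemma Delta.mono_of_zero (Δ : Delta Φ) (S : ShortComplex (ModuleCat.{u} R)) (hS : S.ShortExact)
    (h2 : IsZero (Δ.T 1 S.X₂)) (h3 : IsZero (Δ.T 1 S.X₃)) : Mono (Φ.map S.f) := by
  obtain ⟨δ, w, hm, hex⟩ := Δ.one S hS h2
  exact (ShortComplex.exact_iff_mono _ (h3.eq_of_src _ _)).1 hex

structure MainData (C : CoChain R) (m : ℕ) (E : ModuleCat.{u} R) (Δ : Delta Φ) where
  q : C.Z (m + 1) ⟶ E
  wq : C.inc m ≫ q = 0
  se : (ShortComplex.mk _ _ wq).ShortExact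
  lt : ∀ j, j < m → C.EA j
  gt : ∀ j, m < j → C.EA j
  hZ : ∀ i, IsZero (Δ.T (i + 1) (C.Z (m + 1)))
  hB : ∀ i j, m < j → IsZero (Δ.T (i + 1) (C.B j))

lemma MainData.big {C : CoChain R} {m : ℕ} {E : ModuleCat.{u} R} {Δ : Delta Φ}
    (D : MainData C m E Δ) (k : ℕ) :
    Nonempty (Δ.T (k + 1 + (m + 1)) E ≅ Δ.T (k + 1) (C.B 0)) := by
  obtain ⟨e⟩ := Δ.SB C m k 0 m (by omega) (fun t _ h => D.lt t h)
  obtain ⟨f⟩ := Δ.shift _ D.se (k + m) (D.hZ _) (D.hZ _)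
  have h1 : k + 1 + (m + 1) = k + m + 2 := by omega
  have h2 : k + 1 + m = k + m + 1 := by omega
  rw [h1]; rw [h2] at e
  exact ⟨f ≪≫ e⟩

lemma MainData.monoZ {C : CoChain R} {m : ℕ} {E : ModuleCat.{u} R} {Δ : Delta Φ}
    (D : MainData C m E Δ) : Mono (Φ.map (C.zι (m + 1))) :=
  Δ.mono_of_zero _ (C.zses (m + 1)) (Δ.proj _ (C.proj _) 0) (D.hB 0 _ (by omega))

lemma MainData.small {C : CoChain R} {m : ℕ} {E : ModuleCat.{u} R} {Δ : Delta Φ}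
    (D : MainData C m E Δ) (i j : ℕ) (hij : i + j = m) :
    Nonempty (Δ.T i E ≅ (C.sc Φ j).homology) := by
  have hmZ := D.monoZ
  rcases i with _ | _ | i
  · obtain rfl : m = j := by omega
    obtain ⟨e⟩ := Δ.zero E
    obtain ⟨hx, hepi⟩ := Δ.rex _ D.se.exact D.se.epi_g
    obtain ⟨hz, hzepi⟩ := Δ.rex _ (C.zses (m + 1)).exact (C.zses (m + 1)).epi_g
    obtain ⟨-, hbepi⟩ := Δ.rex _ (C.zses m).exact (C.zses m).epi_g
    have hmB : Mono (Φ.map (C.bι (m + 1))) :=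
      Δ.mono_of_zero _ (C.ses (D.gt (m + 1) (by omega))) (Δ.proj _ (C.proj _) 0)
        (D.hB 0 _ (by omega))
    have h0 : Φ.map (C.zι (m + 1)) ≫ Φ.map (ModuleCat.ofHom (C.d (m + 1))) = 0 := by
      rw [← C.fac, Φ.map_comp, ← Category.assoc, ← Φ.map_comp, C.zπ, Φ.map_zero, zero_comp]
    have hex : (ShortComplex.mk _ _ h0).Exact :=
      exact_comp_mono' _ _ _ _ (by rw [← Φ.map_comp, C.fac]) _ _ hmB hz
    have hwq : (Φ.map (C.bπ m) ≫ Φ.map (C.inc m)) ≫ Φ.map D.q = 0 := by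
      rw [Category.assoc, ← Φ.map_comp (C.inc m), D.wq, Φ.map_zero, comp_zero]
    have hqx : (ShortComplex.mk _ _ hwq).Exact := exact_epi_comp' _ _ _ _ rfl _ _ hbepi hx
    have hf : (Φ.map (C.bπ m) ≫ Φ.map (C.inc m)) ≫ Φ.map (C.zι (m + 1))
        = Φ.map (ModuleCat.ofHom (C.d m)) := by
      rw [← Φ.map_comp, ← Φ.map_comp]; rfl
    have hab : ((Φ.map (C.bπ m) ≫ Φ.map (C.inc m)) ≫ Φ.map (C.zι (m + 1)))
        ≫ Φ.map (ModuleCat.ofHom (C.d (m + 1))) = 0 := by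
      rw [hf]; exact C.Φdd Φ m
    obtain ⟨f⟩ := homCaux _ _ _ hab h0 hex hmZ _ hwq hepi hqx
    have : C.sc Φ m = ShortComplex.mk _ _ hab := by
      unfold CoChain.sc
      congr 1
      exact hf.symm
    rw [this]
    exact ⟨e ≪≫ f.symm⟩
  · obtain rfl : m = j + 1 := by omega
    obtain ⟨δ, w, hm, hex⟩ := Δ.one _ D.se (D.hZ _)
    have hι : C.bι (j + 1) = C.inc (j + 1) ≫ C.zι (j + 1 + 1) := rfl
    have hk : δ ≫ Φ.map (C.bι (j + 1)) = 0 := by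
      rw [hι, Φ.map_comp, ← Category.assoc, w, zero_comp]
    have hke : (ShortComplex.mk _ _ hk).Exact :=
      exact_comp_mono' _ _ _ _ (by rw [hι, Φ.map_comp]) _ _ hmZ hex
    obtain ⟨e⟩ := Δ.HB C (D.lt j (by omega)) δ hk hm hke
    exact ⟨e.symm⟩
  · obtain ⟨e⟩ := Δ.HT C (D.lt j (by omega)) (D.lt (j + 1) (by omega))
    obtain ⟨e2⟩ := Δ.SB C i 0 (j + 2) m (by omega) (fun t _ h => D.lt t h)
    obtain ⟨f⟩ := Δ.shift _ D.se i (D.hZ _) (D.hZ _)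
    rw [show 0 + 1 + i = i + 1 by omega] at e2
    exact ⟨f ≪≫ e2 ≪≫ e.symm⟩

end
end

noncomputable section

open Limits

section
variable {R : Type u} [CommRing R]

/-- Hom into N, as a covariant functor to the opposite category. -/
abbrev hF (N : ModuleCat.{u} R) : ModuleCat.{u} R ⥤ (ModuleCat.{u} R)ᵒᵖ :=
  ((linearYoneda R (ModuleCat.{u} R)).obj N).rightOp

lemma hF_map_apply (N : ModuleCat.{u} R) {X Y : ModuleCat.{u} R} (f : X ⟶ Y) (h : Y ⟶ N) :
    ((hF N).map f).unop.hom h = f ≫ h := rfl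

lemma exact_of_unop {X Y Z : (ModuleCat.{u} R)ᵒᵖ} (f : X ⟶ Y) (g : Y ⟶ Z) (w : f ≫ g = 0)
    (h : ∀ x : Y.unop, f.unop.hom x = 0 → ∃ y : Z.unop, g.unop.hom y = x) :
    (ShortComplex.mk f g w).Exact := by
  rw [← ShortComplex.exact_unop_iff, ShortComplex.moduleCat_exact_iff]
  exact h

lemma mono_of_unop {X Y : (ModuleCat.{u} R)ᵒᵖ} (f : X ⟶ Y)
    (h : Function.Surjective f.unop.hom) : Mono f := by
  rw [← unop_epi_iff, ModuleCat.epi_iff_surjective]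
  exact h

lemma epi_of_unop {X Y : (ModuleCat.{u} R)ᵒᵖ} (f : X ⟶ Y)
    (h : Function.Injective f.unop.hom) : Epi f := by
  rw [← unop_mono_iff, ModuleCat.mono_iff_injective]
  exact h

open Abelian in
def extDelta (N : ModuleCat.{u} R) : Delta (hF N) where
  T i X := Opposite.op (ModuleCat.of R (Ext X N i))
  zero X := ⟨((Ext.linearEquiv₀ (R := R) (X := X) (Y := N)).toModuleIso.symm).op⟩
  proj X hX i := by
    have : Projective X := (IsProjective.iff_projective X).1 hX
    refine IsZero.op ?_
    have : Subsingleton (Ext X N (i + 1)) := subsingleton_of_forall_eq 0 Ext.eq_zero_of_projective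
    exact ModuleCat.isZero_of_subsingleton _
  rex S hS hg := by
    constructor
    · refine exact_of_unop _ _ _ ?_
      intro h hh
      exact ⟨hS.desc h hh, hS.g_desc h hh⟩
    · refine epi_of_unop _ ?_
      intro a b hab
      exact (cancel_epi S.g).1 hab
  shift S hS i h1 h2 := by
    have s1 : Subsingleton (Ext S.X₂ N (i + 1)) := ModuleCat.subsingleton_of_isZero h1.unop
    have s2 : Subsingleton (Ext S.X₂ N (i + 2)) := ModuleCat.subsingleton_of_isZero h2.unop
    have hadd : 1 + (i + 1) = i + 2 := by omega
    let f := Ext.precompOfLinear hS.extClass R N hadd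
    have hf : Function.Bijective f := by
      constructor
      · rw [← LinearMap.ker_eq_bot, LinearMap.ker_eq_bot']
        intro x hx
        obtain ⟨y, hy⟩ := Ext.contravariant_sequence_exact₁ hS N x hadd hx
        rw [← hy, Subsingleton.elim y 0, Ext.comp_zero]
      · intro x
        exact Ext.contravariant_sequence_exact₃ hS N x (Subsingleton.elim _ _) hadd
    exact ⟨((LinearEquiv.ofBijective f hf).toModuleIso).op⟩
  one S hS h1 := by
    have s1 : Subsingleton (Ext S.X₂ N 1) := ModuleCat.subsingleton_of_isZero h1.unop
    let f : (S.X₁ ⟶ N) →ₗ[R] Ext S.X₃ N 1 :=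
      (Ext.precompOfLinear hS.extClass R N (add_zero 1)) ∘ₗ
        (Ext.linearEquiv₀ (R := R) (X := S.X₁) (Y := N)).symm.toLinearMap
    have hf : ∀ h, f h = hS.extClass.comp (Ext.mk₀ h) (add_zero 1) := fun h => rfl
    refine ⟨(ModuleCat.ofHom f).op, ?_, ?_, ?_⟩
    · apply Quiver.Hom.unop_inj
      ext (h : S.X₂ ⟶ N)
      change f (S.f ≫ h) = 0
      rw [hf, ← Ext.mk₀_comp_mk₀]
      exact hS.extClass_comp_assoc _
    · refine mono_of_unop _ ?_
      intro x
      obtain ⟨y, hy⟩ := Ext.contravariant_sequence_exact₃ hS N x (Subsingleton.elim _ _) (add_zero 1)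
      obtain ⟨h, rfl⟩ := (Ext.linearEquiv₀ (R := R) (X := S.X₁) (Y := N)).symm.surjective y
      exact ⟨h, hy⟩
    · refine exact_of_unop _ _ _ ?_
      intro (h : S.X₁ ⟶ N) hh
      obtain ⟨y, hy⟩ := Ext.contravariant_sequence_exact₁ hS N (Ext.mk₀ h) (add_zero 1) hh
      obtain ⟨k, rfl⟩ := (Ext.linearEquiv₀ (R := R) (X := S.X₂) (Y := N)).symm.surjective y
      refine ⟨k, ?_⟩
      change S.f ≫ k = h
      apply (Ext.mk₀_bijective S.X₁ N).1
      rw [← Ext.mk₀_comp_mk₀]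
      exact hy

end
end

noncomputable section

open Limits

section
variable {R : Type u} [CommRing R]

/-- resolution data to chain -/
structure PreRes (R : Type u) [CommRing R] (M : ModuleCat.{u} R) where
  P : ℕ → ModuleCat.{u} R
  proj : ∀ i, Module.Projective R (P i)
  d : (i : ℕ) → (↥(P (i + 1)) →ₗ[R] ↥(P i))
  ε : ↥(P 0) →ₗ[R] M
  surj : Function.Surjective ε
  exact0 : LinearMap.range (d 0) = LinearMap.ker ε
  exact : ∀ i, LinearMap.range (d (i + 1)) = LinearMap.ker (d i)

namespace PreRes
variable {M : ModuleCat.{u} R} (F : PreRes R M)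

def X : ℕ → ModuleCat.{u} R
  | 0 => M
  | j + 1 => ModuleCat.of R (LinearMap.range (F.d j))

def ι (j : ℕ) : F.X (j + 1) ⟶ F.P j := ModuleCat.ofHom (LinearMap.range (F.d j)).subtype

def π : ∀ j : ℕ, F.P j ⟶ F.X j
  | 0 => ModuleCat.ofHom F.ε
  | j + 1 => ModuleCat.ofHom (LinearMap.rangeRestrict (F.d j))

lemma w : ∀ j, F.ι j ≫ F.π j = 0
  | 0 => by
    ext ⟨x, hx⟩
    rw [F.exact0] at hx
    exact hx
  | j + 1 => by
    ext ⟨x, hx⟩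
    rw [F.exact] at hx
    exact Subtype.ext hx

lemma se : ∀ j, (ShortComplex.mk (F.ι j) (F.π j) (F.w j)).ShortExact
  | 0 => by
    refine ModuleCat.shortComplex_shortExact _ ?_ Subtype.val_injective F.surj
    intro x
    constructor
    · intro hx
      have hx : x ∈ LinearMap.ker F.ε := hx
      rw [← F.exact0] at hx
      exact ⟨⟨x, hx⟩, rfl⟩
    · rintro ⟨⟨y, hy⟩, rfl⟩
      rw [F.exact0] at hy
      exact hy
  | j + 1 => by
    refine ModuleCat.shortComplex_shortExact _ ?_ Subtype.val_injective
      (LinearMap.surjective_rangeRestrict _)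
    intro x
    constructor
    · intro hx
      have hx : x ∈ LinearMap.ker (F.d j) := congrArg Subtype.val hx
      rw [← F.exact] at hx
      exact ⟨⟨x, hx⟩, rfl⟩
    · rintro ⟨⟨y, hy⟩, rfl⟩
      rw [F.exact] at hy
      exact Subtype.ext hy

def chain : Chain R where
  X := F.X
  P := F.P
  ι := F.ι
  π := F.π
  w := F.w
  se := F.se
  proj := F.proj
  d := F.d
  fac _ := rfl

end PreRes

def preResOf {M : ModuleCat.{u} R} (Q : ProjectiveResolution M) : PreRes R M where
  P := Q.complex.X
  proj i := (IsProjective.iff_projective _).2 (Q.projective i)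
  d i := (Q.complex.d (i + 1) i).hom
  ε := (Q.π.f 0 ≫ (HomologicalComplex.singleObjXSelf (ComplexShape.down ℕ) 0 M).hom).hom
  surj := by
    have : Epi (Q.π.f 0) := inferInstance
    exact (ModuleCat.epi_iff_surjective _).1 inferInstance
  exact0 := by
    have h := Q.exact₀
    rw [ShortComplex.moduleCat_exact_iff_range_eq_ker] at h
    refine h.trans ?_
    ext x
    rw [LinearMap.mem_ker, LinearMap.mem_ker]
    rfl
  exact i := by
    have h := Q.exact_succ i
    rw [ShortComplex.moduleCat_exact_iff_range_eq_ker] at h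
    exact h

lemma derivedIso {A : Type w} [Category.{v} A] [Abelian A]
    {Φ : ModuleCat.{u} R ⥤ A} [Φ.Additive] (Δ : Delta Φ) (i : ℕ) (X : ModuleCat.{u} R) :
    Nonempty ((Φ.leftDerived i).obj X ≅ Δ.T i X) := by
  rcases i with _ | j
  · obtain ⟨e⟩ := Δ.zero X
    have t : (∀ (S : ShortComplex (ModuleCat.{u} R)), S.Exact ∧ Epi S.g →
        (S.map Φ).Exact ∧ Epi (Φ.map S.g)) ↔ PreservesFiniteColimits Φ :=
      (Functor.preservesFiniteColimits_tfae Φ).out 1 3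
    have : PreservesFiniteColimits Φ := t.1 (fun S h => Δ.rex S h.1 h.2)
    exact ⟨(Φ.leftDerivedZeroIsoSelf).app X ≪≫ e.symm⟩
  · let Q := projectiveResolution X
    have hab : Φ.map (ModuleCat.ofHom ((preResOf Q).d (j + 1))) ≫
        Φ.map (ModuleCat.ofHom ((preResOf Q).d j)) = 0 := by
      rw [← Φ.map_comp]
      exact (congrArg Φ.map (Q.complex.d_comp_d (j + 2) (j + 1) j)).trans (Φ.map_zero _ _)
    obtain ⟨e⟩ := Δ.res (preResOf Q).chain j hab
    let K := (Φ.mapHomologicalComplex (ComplexShape.down ℕ)).obj Q.complex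
    let f := K.isoSc' (j + 2) (j + 1) j (by simp only [ChainComplex.prev]; rfl) (by simp)
    exact ⟨Q.isoLeftDerivedObj Φ (j + 1) ≪≫ (ShortComplex.homologyMapIso f) ≪≫ e⟩

lemma extIso (i : ℕ) (X N : ModuleCat.{u} R) :
    Nonempty (((Ext R (ModuleCat.{u} R) i).obj (Opposite.op X)).obj N ≅
      ((extDelta N).T i X).unop) := by
  obtain ⟨e⟩ := derivedIso (extDelta N) i X
  exact ⟨e.unop.symm⟩

end
end

noncomputable section

open Limits MonoidalCategory

section
variable {R : Type u} [CommRing R]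

abbrev tF (N : ModuleCat.{u} R) : ModuleCat.{u} R ⥤ ModuleCat.{u} R :=
  (tensoringRight (ModuleCat.{u} R)).obj N

abbrev lF (X : ModuleCat.{u} R) : ModuleCat.{u} R ⥤ ModuleCat.{u} R :=
  (tensoringLeft (ModuleCat.{u} R)).obj X

variable {N : ModuleCat.{u} R} (Q : ProjectiveResolution N)

abbrev tK (X : ModuleCat.{u} R) : ChainComplex (ModuleCat.{u} R) ℕ :=
  ((lF X).mapHomologicalComplex _).obj Q.complex

def tKmap {X Y : ModuleCat.{u} R} (f : X ⟶ Y) : tK Q X ⟶ tK Q Y :=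
  (NatTrans.mapHomologicalComplex ((tensoringLeft (ModuleCat.{u} R)).map f) _).app Q.complex

lemma tKmap_f {X Y : ModuleCat.{u} R} (f : X ⟶ Y) (i : ℕ) :
    (tKmap Q f).f i = f ▷ Q.complex.X i := rfl

lemma tKzero {X Y Z : ModuleCat.{u} R} (f : X ⟶ Y) (g : Y ⟶ Z) (w : f ≫ g = 0) :
    tKmap Q f ≫ tKmap Q g = 0 := by
  ext i : 1
  refine (comp_whiskerRight f g (Q.complex.X i)).symm.trans ?_
  rw [w, MonoidalPreadditive.zero_whiskerRight]
  rfl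

abbrev tKS (S : ShortComplex (ModuleCat.{u} R)) : ShortComplex (ChainComplex (ModuleCat.{u} R) ℕ) :=
  ShortComplex.mk _ _ (tKzero Q S.f S.g S.zero)

lemma tKS_se (S : ShortComplex (ModuleCat.{u} R)) (hS : S.ShortExact) : (tKS Q S).ShortExact := by
  apply HomologicalComplex.shortExact_of_degreewise_shortExact
  intro i
  have : Module.Projective R (Q.complex.X i) := (IsProjective.iff_projective _).2 (Q.projective i)
  have : Module.Flat R (Q.complex.X i) := inferInstance
  exact hS.map_of_exact (tensorRight (Q.complex.X i))

lemma tK_zero_of_proj (X : ModuleCat.{u} R) (hX : Module.Projective R X) (i : ℕ) :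
    IsZero ((tK Q X).homology (i + 1)) := by
  rw [← HomologicalComplex.exactAt_iff_isZero_homology]
  rw [HomologicalComplex.exactAt_iff' _ (i + 2) (i + 1) i (by simp only [ChainComplex.prev]; rfl)
    (by simp)]
  have : Module.Flat R X := inferInstance
  have h : ((ShortComplex.mk _ _ (Q.complex.d_comp_d (i + 2) (i + 1) i)).map (tensorLeft X)).Exact :=
    (Q.exact_succ i).map (tensorLeft X)
  exact h

def tα (X : ModuleCat.{u} R) : (tK Q X).homology 0 ≅ (tF N).obj X :=
  have : PreservesFiniteColimits (lF X) := inferInstanceAs (PreservesFiniteColimits (tensorLeft X))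
  have : IsIso (Q.fromLeftDerivedZero' (lF X)) := inferInstance
  (ChainComplex.isoHomologyι₀ _) ≪≫ asIso (Q.fromLeftDerivedZero' (lF X))

lemma tα_nat {X Y : ModuleCat.{u} R} (f : X ⟶ Y) :
    HomologicalComplex.homologyMap (tKmap Q f) 0 ≫ (tα Q Y).hom = (tα Q X).hom ≫ (tF N).map f := by
  have h : HomologicalComplex.opcyclesMap (tKmap Q f) 0 ≫ Q.fromLeftDerivedZero' (lF Y) =
      Q.fromLeftDerivedZero' (lF X) ≫ (tF N).map f := by
    rw [← cancel_epi (HomologicalComplex.pOpcycles _ _),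
      HomologicalComplex.p_opcyclesMap_assoc, 
      ProjectiveResolution.pOpcycles_comp_fromLeftDerivedZero',
      ProjectiveResolution.pOpcycles_comp_fromLeftDerivedZero'_assoc, tKmap_f]
    exact (whisker_exchange f (Q.π.f 0)).symm
  change _ ≫ HomologicalComplex.homologyι _ 0 ≫ _ = (HomologicalComplex.homologyι _ 0 ≫ _) ≫ _
  rw [HomologicalComplex.homologyι_naturality_assoc, Category.assoc]
  exact congrArg _ h

def torDeltaQ : Delta (tF N) where
  T i X := (tK Q X).homology i
  zero X := ⟨tα Q X⟩
  proj X hX i := tK_zero_of_proj Q X hX i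
  rex S hS hg := by
    have t : (∀ (S : ShortComplex (ModuleCat.{u} R)), S.Exact ∧ Epi S.g →
        (S.map (tF N)).Exact ∧ Epi ((tF N).map S.g)) ↔ PreservesFiniteColimits (tF N) :=
      (Functor.preservesFiniteColimits_tfae (tF N)).out 1 3
    have : PreservesFiniteColimits (tF N) :=
      inferInstanceAs (PreservesFiniteColimits (tensorRight N))
    exact t.2 this S ⟨hS, hg⟩
  shift S hS i h1 h2 := ⟨(tKS_se Q S hS).δIso (i + 2) (i + 1) rfl h2 h1⟩
  one S hS h1 := by
    have hse := tKS_se Q S hS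
    have hm := hse.mono_δ 1 0 rfl h1
    have hex := hse.homology_exact₁ 1 0 rfl
    have hw : (hse.δ 1 0 rfl ≫ (tα Q S.X₁).hom) ≫ (tF N).map S.f = 0 := by
      rw [Category.assoc, ← tα_nat, ← Category.assoc]
      exact (congrArg (fun t => t ≫ _) (hse.δ_comp 1 0 rfl)).trans zero_comp
    refine ⟨hse.δ 1 0 rfl ≫ (tα Q S.X₁).hom, hw, mono_comp _ _, ?_⟩
    let e : ShortComplex.mk _ _ (hse.δ_comp 1 0 rfl) ≅ ShortComplex.mk _ _ hw :=
      ShortComplex.isoMk (Iso.refl _) (tα Q S.X₁) (tα Q S.X₂)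
        (Category.id_comp _) (tα_nat Q S.f).symm
    exact ShortComplex.exact_of_iso e hex

end
section
variable {R : Type u} [CommRing R]

def torDelta (N : ModuleCat.{u} R) : Delta (tF N) := torDeltaQ (projectiveResolution N)

lemma torIso (i : ℕ) (X N : ModuleCat.{u} R) :
    Nonempty (((Tor (ModuleCat.{u} R) i).obj X).obj N ≅ (torDelta N).T i X) :=
  ⟨(projectiveResolution N).isoLeftDerivedObj (lF X) i⟩
end
end

noncomputable section

open Limits MonoidalCategory

section
variable {R : Type u} [CommRing R]

lemma opHomology (S : ShortComplex (ModuleCat.{u} R)) (U : ShortComplex (ModuleCat.{u} R)ᵒᵖ)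
    (e₁ : S.X₁ ≅ U.X₃.unop) (e₂ : S.X₂ ≅ U.X₂.unop) (e₃ : S.X₃ ≅ U.X₁.unop)
    (h₁ : e₁.hom ≫ U.g.unop = S.f ≫ e₂.hom) (h₂ : e₂.hom ≫ U.f.unop = S.g ≫ e₃.hom) :
    Nonempty (U.homology ≅ Opposite.op S.homology) := by
  let e : U ≅ S.op := ShortComplex.isoMk e₃.op e₂.op e₁.op
    (by
      apply Quiver.Hom.unop_inj
      exact h₂.symm)
    (by
      apply Quiver.Hom.unop_inj
      exact h₁.symm)
  exact ⟨ShortComplex.homologyMapIso e ≪≫ S.homologyOpIso⟩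

def crossA (P N : ModuleCat.{u} R) (hf : Module.Finite R P) (hp : Module.Projective R P) :
    (tF N).obj (ModuleCat.of R (Module.Dual R P)) ≅ ((hF N).obj P).unop :=
  ((dualTensorHomEquiv R P N).trans (ModuleCat.homLinearEquiv (S := R)).symm).toModuleIso

lemma crossA_nat {P P' : ModuleCat.{u} R} (N : ModuleCat.{u} R) (hf : Module.Finite R P)
    (hp : Module.Projective R P) (hf' : Module.Finite R P') (hp' : Module.Projective R P')
    (f : P →ₗ[R] P') :
    (crossA P' N hf' hp').hom ≫ ((hF N).map (ModuleCat.ofHom f)).unop =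
      (tF N).map (ModuleCat.ofHom f.dualMap) ≫ (crossA P N hf hp).hom := by
  apply ModuleCat.hom_ext
  apply TensorProduct.ext'
  intro φ n
  change ModuleCat.ofHom f ≫ ModuleCat.ofHom (dualTensorHom R P' N (φ ⊗ₜ n)) =
    ModuleCat.ofHom (dualTensorHom R P N (f.dualMap φ ⊗ₜ n))
  ext x
  simp

def crossB (P N : ModuleCat.{u} R) (hf : Module.Finite R P) (hp : Module.Projective R P) :
    (tF N).obj P ≅ ((hF N).obj (ModuleCat.of R (Module.Dual R P))).unop :=
  (((TensorProduct.congr (Module.evalEquiv R P) (LinearEquiv.refl R N)).trans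
    (dualTensorHomEquiv R (Module.Dual R P) N)).trans
      (ModuleCat.homLinearEquiv (S := R)
        (M := ModuleCat.of R (Module.Dual R P))).symm).toModuleIso

lemma crossB_nat {P P' : ModuleCat.{u} R} (N : ModuleCat.{u} R) (hf : Module.Finite R P)
    (hp : Module.Projective R P) (hf' : Module.Finite R P') (hp' : Module.Projective R P')
    (f : P →ₗ[R] P') :
    (crossB P N hf hp).hom ≫ ((hF N).map (ModuleCat.ofHom f.dualMap)).unop =
      (tF N).map (ModuleCat.ofHom f) ≫ (crossB P' N hf' hp').hom := by
  apply ModuleCat.hom_ext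
  apply TensorProduct.ext'
  intro p n
  change ModuleCat.ofHom f.dualMap ≫
      ModuleCat.ofHom (dualTensorHom R (Module.Dual R P) N (Module.Dual.eval R P p ⊗ₜ n)) =
    ModuleCat.ofHom (dualTensorHom R (Module.Dual R P') N (Module.Dual.eval R P' (f p) ⊗ₜ n))
  ext x
  simp

def Chain.dual (Q : Chain R) (hf : ∀ j, Module.Finite R (Q.P j)) : CoChain R where
  D j := ModuleCat.of R (Module.Dual R (Q.P j))
  proj j := by
    have := hf j
    have := Q.proj j
    exact inferInstanceAs (Module.Projective R (Module.Dual R (Q.P j)))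
  d j := (Q.d j).dualMap
  dd j := by
    have h : Q.d j ∘ₗ Q.d (j + 1) = 0 := congrArg ModuleCat.Hom.hom (Q.dd j)
    ext φ x
    have := LinearMap.congr_fun h x
    simp only [LinearMap.comp_apply, LinearMap.zero_apply] at this
    simp [this]

lemma cross1 (Q : Chain R) (hf : ∀ j, Module.Finite R (Q.P j)) (N : ModuleCat.{u} R) (j : ℕ) :
    Nonempty ((extDelta N).T (j + 1) (Q.X 0) ≅
      Opposite.op ((Q.dual hf).sc (tF N) j).homology) := by
  have hab : (hF N).map (ModuleCat.ofHom (Q.d (j + 1))) ≫ (hF N).map (ModuleCat.ofHom (Q.d j)) = 0 := by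
    rw [← (hF N).map_comp, Q.dd, (hF N).map_zero]
  obtain ⟨e⟩ := (extDelta N).res Q j hab
  obtain ⟨f⟩ := opHomology ((Q.dual hf).sc (tF N) j) (ShortComplex.mk _ _ hab)
    (crossA _ N (hf j) (Q.proj j)) (crossA _ N (hf (j + 1)) (Q.proj (j + 1)))
    (crossA _ N (hf (j + 2)) (Q.proj (j + 2))) (crossA_nat N _ _ _ _ _) (crossA_nat N _ _ _ _ _)
  exact ⟨e.symm ≪≫ f⟩

lemma cross2 (Q : Chain R) (hf : ∀ j, Module.Finite R (Q.P j)) (N : ModuleCat.{u} R) (j : ℕ) :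
    Nonempty (((Q.dual hf).sc (hF N) j).homology ≅
      Opposite.op ((torDelta N).T (j + 1) (Q.X 0))) := by
  have hab : (tF N).map (ModuleCat.ofHom (Q.d (j + 1))) ≫ (tF N).map (ModuleCat.ofHom (Q.d j)) = 0 := by
    rw [← (tF N).map_comp, Q.dd, (tF N).map_zero]
  obtain ⟨e⟩ := (torDelta N).res Q j hab
  obtain ⟨f⟩ := opHomology (ShortComplex.mk _ _ hab) ((Q.dual hf).sc (hF N) j)
    (crossB _ N (hf (j + 2)) (Q.proj (j + 2))) (crossB _ N (hf (j + 1)) (Q.proj (j + 1)))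
    (crossB _ N (hf j) (Q.proj j)) (crossB_nat N _ _ _ _ _) (crossB_nat N _ _ _ _ _)
  exact ⟨f ≪≫ e.symm.op⟩

end
end

noncomputable section

open Limits MonoidalCategory

section
variable {R : Type u} [CommRing R]

lemma extM_iff (i : ℕ) (X N : Type u) [AddCommGroup X] [Module R X] [AddCommGroup N] [Module R N] :
    Subsingleton (extM R i X N) ↔
      IsZero ((extDelta (ModuleCat.of R N)).T i (ModuleCat.of R X)) := by
  obtain ⟨e⟩ := extIso i (ModuleCat.of R X) (ModuleCat.of R N)
  constructor
  · intro h
    have h1 : IsZero (((Ext R (ModuleCat.{u} R) i).obj (Opposite.op (ModuleCat.of R X))).obj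
      (ModuleCat.of R N)) := ModuleCat.isZero_of_subsingleton _
    exact (h1.of_iso e.symm).op
  · intro h
    exact ModuleCat.subsingleton_of_isZero (h.unop.of_iso e)

lemma torM_iff (i : ℕ) (X N : Type u) [AddCommGroup X] [Module R X] [AddCommGroup N] [Module R N] :
    Subsingleton (torM R i X N) ↔
      IsZero ((torDelta (ModuleCat.of R N)).T i (ModuleCat.of R X)) := by
  obtain ⟨e⟩ := torIso i (ModuleCat.of R X) (ModuleCat.of R N)
  constructor
  · intro h
    have h1 : IsZero (((Tor (ModuleCat.{u} R) i).obj (ModuleCat.of R X)).obj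
      (ModuleCat.of R N)) := ModuleCat.isZero_of_subsingleton _
    exact (h1.of_iso e.symm)
  · intro h
    exact ModuleCat.subsingleton_of_isZero (h.of_iso e)

/-- vanishing of higher Ext into R -/
def Acy (X : ModuleCat.{u} R) : Prop :=
  ∀ i, IsZero ((extDelta (ModuleCat.of R R)).T (i + 1) X)

lemma Chain.EA_of (Q : Chain R) (hf : ∀ j, Module.Finite R (Q.P j)) (j : ℕ)
    (h : IsZero ((extDelta (ModuleCat.of R R)).T (j + 1) (Q.X 0))) : (Q.dual hf).EA j := by
  set N := ModuleCat.of R R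
  have hab : (hF N).map (ModuleCat.ofHom (Q.d (j + 1))) ≫ (hF N).map (ModuleCat.ofHom (Q.d j)) = 0 := by
    rw [← (hF N).map_comp, Q.dd, (hF N).map_zero]
  obtain ⟨e⟩ := (extDelta N).res Q j hab
  have hex : (ShortComplex.mk _ _ hab).Exact := by
    rw [ShortComplex.exact_iff_isZero_homology]
    exact h.of_iso e
  rw [← ShortComplex.exact_unop_iff, ShortComplex.moduleCat_exact_iff] at hex
  intro φ hφ
  obtain ⟨ψ, hψ⟩ := hex (ModuleCat.ofHom φ) (by
    change ModuleCat.ofHom (Q.d (j + 1)) ≫ ModuleCat.ofHom φ = 0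
    exact congrArg ModuleCat.ofHom hφ)
  exact ⟨ModuleCat.Hom.hom ψ, congrArg ModuleCat.Hom.hom hψ⟩

lemma genEx (X : {X : ModuleCat.{u} R // Module.Finite R X}) :
    ∃ n : ℕ, ∃ f : (Fin n → R) →ₗ[R] X.1, Function.Surjective f := by
  have := X.2
  exact Module.Finite.exists_fin' R X.1

/-- one step of a resolution -/
def genN (X : {X : ModuleCat.{u} R // Module.Finite R X}) : ℕ := (genEx X).choose

def genF (X : {X : ModuleCat.{u} R // Module.Finite R X}) : (Fin (genN X) → R) →ₗ[R] X.1 :=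
  (genEx X).choose_spec.choose

lemma genS (X : {X : ModuleCat.{u} R // Module.Finite R X}) : Function.Surjective (genF X) :=
  (genEx X).choose_spec.choose_spec

lemma vanB {A : Type w} [Category.{v} A] [Abelian A]
    {Φ : ModuleCat.{u} R ⥤ A} [Φ.Additive] (Δ : Delta Φ) (d : ℕ)
    (hd : ∀ i, d < i → ∀ X, IsZero (Δ.T i X)) (C : CoChain R) (j : ℕ)
    (hE : ∀ t, j ≤ t → C.EA t) (i : ℕ) : IsZero (Δ.T (i + 1) (C.B j)) := by
  obtain ⟨e⟩ := Δ.SB C d i j (j + d) rfl (fun t h _ => hE t h)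
  exact (hd _ (by omega) _).of_iso e.symm

variable [IsNoetherianRing R]

def syz (X : {X : ModuleCat.{u} R // Module.Finite R X}) :
    {X : ModuleCat.{u} R // Module.Finite R X} :=
  ⟨ModuleCat.of R (LinearMap.ker (genF X)),
    inferInstanceAs (Module.Finite R (LinearMap.ker (genF X)))⟩

def syzs (X : {X : ModuleCat.{u} R // Module.Finite R X}) :
    ℕ → {X : ModuleCat.{u} R // Module.Finite R X}
  | 0 => X
  | j + 1 => syz (syzs X j)

def finChain (X : {X : ModuleCat.{u} R // Module.Finite R X}) : Chain R where
  X j := (syzs X j).1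
  P j := ModuleCat.of R (Fin (genN (syzs X j)) → R)
  ι j := ModuleCat.ofHom (LinearMap.ker (genF (syzs X j))).subtype
  π j := ModuleCat.ofHom (genF (syzs X j))
  w j := by
    ext ⟨x, hx⟩
    exact hx
  se j := by
    refine ModuleCat.shortComplex_shortExact _ ?_ Subtype.val_injective (genS _)
    intro x
    constructor
    · intro hx
      exact ⟨⟨x, hx⟩, rfl⟩
    · rintro ⟨⟨y, hy⟩, rfl⟩
      exact hy
  proj j := inferInstanceAs (Module.Projective R (Fin (genN (syzs X j)) → R))
  d j := (LinearMap.ker (genF (syzs X j))).subtype ∘ₗ (genF (syzs X (j + 1)))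
  fac j := rfl

lemma finChain_fin (X : {X : ModuleCat.{u} R // Module.Finite R X}) (j : ℕ) :
    Module.Finite R ((finChain X).P j) :=
  inferInstanceAs (Module.Finite R (Fin (genN (syzs X j)) → R))

lemma vanExt (N X : ModuleCat.{u} R) (hX : Module.Finite R X) (hA : Acy X) (d : ℕ)
    (hd : ∀ i, d < i → ∀ X, IsZero ((torDelta N).T i X)) (i : ℕ) :
    IsZero ((extDelta N).T (i + 1) X) := by
  let Q := finChain ⟨X, hX⟩
  let hf := finChain_fin ⟨X, hX⟩
  have hE : ∀ t, (Q.dual hf).EA t := fun t => Q.EA_of hf t (hA t)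
  obtain ⟨e⟩ := cross1 Q hf N i
  obtain ⟨f⟩ := (torDelta N).HT (Q.dual hf) (hE i) (hE (i + 1))
  have := vanB (torDelta N) d hd (Q.dual hf) (i + 2) (fun t _ => hE t) 0
  exact (this.of_iso f).op.of_iso e

lemma vanTor (N X : ModuleCat.{u} R) (hX : Module.Finite R X) (hA : Acy X) (d : ℕ)
    (hd : ∀ i, d < i → ∀ X, IsZero ((extDelta N).T i X)) (i : ℕ) :
    IsZero ((torDelta N).T (i + 1) X) := by
  let Q := finChain ⟨X, hX⟩
  let hf := finChain_fin ⟨X, hX⟩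
  have hE : ∀ t, (Q.dual hf).EA t := fun t => Q.EA_of hf t (hA t)
  obtain ⟨e⟩ := cross2 Q hf N i
  obtain ⟨f⟩ := (extDelta N).HT (Q.dual hf) (hE i) (hE (i + 1))
  have := vanB (extDelta N) d hd (Q.dual hf) (i + 2) (fun t _ => hE t) 0
  exact ((this.of_iso f).of_iso e.symm).unop

lemma vanBoth (N : ModuleCat.{u} R) (hN : HasFiniteFlatDim R N ∨ HasFiniteInjDim R N)
    (C : CoChain R) (j : ℕ) (hE : ∀ t, j ≤ t → C.EA t) (hX : Module.Finite R (C.B j))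
    (hA : Acy (C.B j)) (i : ℕ) :
    IsZero ((torDelta N).T (i + 1) (C.B j)) ∧ IsZero ((extDelta N).T (i + 1) (C.B j)) := by
  rcases hN with ⟨d, hd⟩ | ⟨d, hd⟩
  · have hd' : ∀ i, d < i → ∀ X, IsZero ((torDelta N).T i X) :=
      fun i hi X => (torM_iff i X N).1 (hd i hi X)
    exact ⟨vanB _ d hd' C j hE i, vanExt N _ hX hA d hd' i⟩
  · have hd' : ∀ i, d < i → ∀ X, IsZero ((extDelta N).T i X) :=
      fun i hi X => (extM_iff i X N).1 (hd i hi X)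
    exact ⟨vanTor N _ hX hA d hd' i, vanB _ d hd' C j hE i⟩

end
end

noncomputable section

open Limits

section
variable {R : Type u} [CommRing R]

lemma gz_iff (X : Type u) [AddCommGroup X] [Module R X] : IsGDimZero R X ↔
    Module.Finite R X ∧ Function.Bijective (Module.Dual.eval R X) ∧ Acy (ModuleCat.of R X) ∧
      Acy (ModuleCat.of R (Module.Dual R X)) := by
  unfold IsGDimZero Acy
  have h : ∀ (Y : Type u) [AddCommGroup Y] [Module R Y],
      (∀ i : ℕ, 0 < i → Subsingleton (extM R i Y R)) ↔
      ∀ i, IsZero ((extDelta (ModuleCat.of R R)).T (i + 1) (ModuleCat.of R Y)) := by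
    intro Y _ _
    constructor
    · intro h i
      exact (extM_iff _ _ _).1 (h (i + 1) (by omega))
    · intro h i hi
      obtain ⟨j, rfl⟩ : ∃ j, i = j + 1 := ⟨i - 1, by omega⟩
      exact (extM_iff _ _ _).2 (h j)
  rw [h, h]

lemma acy_left {S : ShortComplex (ModuleCat.{u} R)} (hS : S.ShortExact) (h2 : Acy S.X₂)
    (h3 : Acy S.X₃) : Acy S.X₁ := by
  intro i
  obtain ⟨e⟩ := (extDelta (ModuleCat.of R R)).shift S hS i (h2 i) (h2 (i + 1))
  exact (h3 (i + 1)).of_iso e.symm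

open Abelian in
lemma acy_mid {S : ShortComplex (ModuleCat.{u} R)} (hS : S.ShortExact) (h1 : Acy S.X₁)
    (h3 : Acy S.X₃) : Acy S.X₂ := by
  intro i
  have s1 : Subsingleton (Ext S.X₁ (ModuleCat.of R R) (i + 1)) :=
    ModuleCat.subsingleton_of_isZero (h1 i).unop
  have s3 : Subsingleton (Ext S.X₃ (ModuleCat.of R R) (i + 1)) :=
    ModuleCat.subsingleton_of_isZero (h3 i).unop
  have : Subsingleton (Ext S.X₂ (ModuleCat.of R R) (i + 1)) := by
    refine subsingleton_of_forall_eq 0 (fun x => ?_)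
    obtain ⟨y, hy⟩ := Ext.contravariant_sequence_exact₂ hS (ModuleCat.of R R) x
      (Subsingleton.elim _ _)
    rw [← hy, Subsingleton.elim y 0, Ext.comp_zero]
  exact (ModuleCat.isZero_of_subsingleton (ModuleCat.of R (Ext S.X₂ (ModuleCat.of R R) (i + 1)))).op

lemma acy_right {S : ShortComplex (ModuleCat.{u} R)} (hS : S.ShortExact) (h1 : Acy S.X₁)
    (h2 : Acy S.X₂) (hl : ∀ h : S.X₁ →ₗ[R] R, ∃ k : S.X₂ →ₗ[R] R, k ∘ₗ S.f.hom = h) :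
    Acy S.X₃ := by
  intro i
  rcases i with _ | i
  · obtain ⟨δ, w, hm, -⟩ := (extDelta (ModuleCat.of R R)).one S hS (h2 0)
    have : Mono ((hF (ModuleCat.of R R)).map S.f) := by
      refine mono_of_unop _ ?_
      intro h
      obtain ⟨k, hk⟩ := hl (ModuleCat.Hom.hom h)
      refine ⟨ModuleCat.ofHom k, ?_⟩
      exact congrArg ModuleCat.ofHom hk
    have hz : δ = 0 := by
      rw [← cancel_mono ((hF (ModuleCat.of R R)).map S.f), w, zero_comp]
    exact (IsZero.iff_id_eq_zero _).2 (hm.right_cancellation _ _ (by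
      rw [hz, comp_zero, comp_zero]))
  · obtain ⟨e⟩ := (extDelta (ModuleCat.of R R)).shift S hS i (h2 i) (h2 (i + 1))
    exact (h1 i).of_iso e

lemma acy_lift {S : ShortComplex (ModuleCat.{u} R)} (hS : S.ShortExact) (h2 : Acy S.X₂)
    (h3 : Acy S.X₃) (h : S.X₁ →ₗ[R] R) : ∃ k : S.X₂ →ₗ[R] R, k ∘ₗ S.f.hom = h := by
  obtain ⟨δ, w, hm, hex⟩ := (extDelta (ModuleCat.of R R)).one S hS (h2 0)
  have : δ = 0 := (h3 0).eq_of_src _ _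
  have hmono : Mono ((hF (ModuleCat.of R R)).map S.f) :=
    (ShortComplex.exact_iff_mono (ShortComplex.mk δ _ w) this).1 hex
  have hep : Epi ((hF (ModuleCat.of R R)).map S.f).unop := inferInstance
  obtain ⟨k, hk⟩ := (ModuleCat.epi_iff_surjective _).1 hep (ModuleCat.ofHom h)
  exact ⟨ModuleCat.Hom.hom k, congrArg ModuleCat.Hom.hom hk⟩

/-- short exact sequences of types -/
structure SES {A W G : Type u} [AddCommGroup A] [Module R A] [AddCommGroup W] [Module R W]
    [AddCommGroup G] [Module R G] (f : A →ₗ[R] W) (g : W →ₗ[R] G) : Prop where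
  inj : Function.Injective f
  surj : Function.Surjective g
  ex : ∀ x, g x = 0 ↔ ∃ y, f y = x

section
variable {A W G : Type u} [AddCommGroup A] [Module R A] [AddCommGroup W] [Module R W]
    [AddCommGroup G] [Module R G] {f : A →ₗ[R] W} {g : W →ₗ[R] G}

lemma SES.w (s : SES f g) : ModuleCat.ofHom f ≫ ModuleCat.ofHom g = 0 := by
  ext x
  exact (s.ex _).2 ⟨x, rfl⟩

lemma SES.se (s : SES f g) : (ShortComplex.mk _ _ s.w).ShortExact :=
  ModuleCat.shortComplex_shortExact _ s.ex s.inj s.surj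

lemma SES.dex (s : SES f g) (φ : Module.Dual R W) :
    f.dualMap φ = 0 ↔ ∃ ψ, g.dualMap ψ = φ := by
  constructor
  · intro h
    have hk : LinearMap.ker g ≤ LinearMap.ker φ := by
      intro x hx
      obtain ⟨y, rfl⟩ := (s.ex x).1 hx
      exact LinearMap.congr_fun h y
    have hr : LinearMap.range g = ⊤ := LinearMap.range_eq_top.2 s.surj
    choose t ht using s.surj
    refine ⟨{ toFun := fun x => φ (t x), map_add' := ?_, map_smul' := ?_ }, ?_⟩
    · intro x y
      rw [← map_add, ← sub_eq_zero, ← map_sub]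
      exact hk (by simp [LinearMap.mem_ker, ht])
    · intro c x
      rw [RingHom.id_apply, ← map_smul, ← sub_eq_zero, ← map_sub]
      exact hk (by simp [LinearMap.mem_ker, ht])
    · ext x
      change φ (t (g x)) = φ x
      rw [← sub_eq_zero, ← map_sub]
      exact hk (by simp [LinearMap.mem_ker, ht])
  · rintro ⟨ψ, rfl⟩
    ext x
    change ψ (g (f x)) = 0
    rw [(s.ex _).2 ⟨x, rfl⟩, map_zero]

lemma SES.dual (s : SES f g) (hl : ∀ h : A →ₗ[R] R, ∃ k : W →ₗ[R] R, k ∘ₗ f = h) :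
    SES g.dualMap f.dualMap where
  inj := LinearMap.dualMap_injective_of_surjective s.surj
  surj := hl
  ex := s.dex

lemma SES.gz_left [IsNoetherianRing R] (s : SES f g) (hW : IsGDimZero R W) (hG : IsGDimZero R G) :
    IsGDimZero R A := by
  rw [gz_iff] at hW hG ⊢
  obtain ⟨w1, w2, w3, w4⟩ := hW
  obtain ⟨g1, g2, g3, g4⟩ := hG
  have d := s.dual (acy_lift s.se w3 g3)
  refine ⟨Module.Finite.of_injective f s.inj, ⟨?_, ?_⟩, acy_left s.se w3 g3, ?_⟩
  · intro x y hxy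
    apply s.inj
    apply w2.1
    ext φ
    exact LinearMap.congr_fun hxy (f.dualMap φ)
  · intro a
    obtain ⟨x, hx⟩ := w2.2 (f.dualMap.dualMap a)
    have h0 : g x = 0 := by
      apply g2.1
      ext ψ
      have := LinearMap.congr_fun hx (g.dualMap ψ)
      have h1 : f.dualMap (g.dualMap ψ) = 0 := (d.ex _).2 ⟨ψ, rfl⟩
      change ψ (g x) = a (f.dualMap (g.dualMap ψ)) at this
      rw [h1, map_zero] at this
      simpa using this
    obtain ⟨y, rfl⟩ := (s.ex x).1 h0
    refine ⟨y, ?_⟩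
    ext φ
    obtain ⟨ψ, rfl⟩ := d.surj φ
    exact LinearMap.congr_fun hx ψ
  · refine acy_right d.se g4 w4 ?_
    intro h
    obtain ⟨x, rfl⟩ := g2.2 h
    obtain ⟨y, rfl⟩ := s.surj x
    exact ⟨Module.Dual.eval R W y, rfl⟩

end

lemma acy_equiv {X Y : Type u} [AddCommGroup X] [Module R X] [AddCommGroup Y] [Module R Y]
    (e : X ≃ₗ[R] Y) (h : Acy (ModuleCat.of R X)) : Acy (ModuleCat.of R Y) := by
  have s : SES (0 : PUnit.{u+1} →ₗ[R] X) e.toLinearMap :=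
    { inj := fun _ _ _ => rfl
      surj := e.surjective
      ex := fun x => by
        constructor
        · intro hx
          exact ⟨0, (e.map_eq_zero_iff.1 hx).symm⟩
        · rintro ⟨y, rfl⟩
          exact map_zero e }
  refine acy_right s.se ?_ h (fun h => ⟨0, ?_⟩)
  · intro i
    exact (extDelta _).proj _ (inferInstanceAs (Module.Projective R PUnit.{u+1})) _
  · apply LinearMap.ext
    intro (x : PUnit)
    have : x = 0 := rfl
    subst this
    exact (map_zero h).symm

lemma gz_of_equiv {A B : Type u} [AddCommGroup A] [Module R A] [AddCommGroup B] [Module R B]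
    (e : A ≃ₗ[R] B) (h : IsGDimZero R A) : IsGDimZero R B := by
  rw [gz_iff] at h ⊢
  obtain ⟨a, b, c, d⟩ := h
  refine ⟨Module.Finite.equiv e, ?_, acy_equiv e c, acy_equiv e.symm.dualMap d⟩
  have : (Module.Dual.eval R B : B → _) =
    (e.symm.dualMap.symm.dualMap ∘ (Module.Dual.eval R A) ∘ e.symm : B → _) := by
    funext x
    ext φ
    simp
  rw [this]
  exact (LinearEquiv.bijective _).comp (b.comp e.symm.bijective)

lemma gz_proj {P : Type u} [AddCommGroup P] [Module R P] [Module.Finite R P]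
    [Module.Projective R P] : IsGDimZero R P := by
  rw [gz_iff]
  refine ⟨inferInstance, Module.bijective_dual_eval R P, fun i => (extDelta _).proj _ ?_ i,
    fun i => (extDelta _).proj _ ?_ i⟩
  · exact inferInstanceAs (Module.Projective R P)
  · exact inferInstanceAs (Module.Projective R (Module.Dual R P))

lemma gz_prod {A P : Type u} [AddCommGroup A] [Module R A] [AddCommGroup P] [Module R P]
    [Module.Finite R P] [Module.Projective R P] (h : IsGDimZero R A) : IsGDimZero R (A × P) := by
  have hP : IsGDimZero R P := gz_proj
  rw [gz_iff] at h hP ⊢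
  obtain ⟨a, b, c, d⟩ := h
  obtain ⟨a', b', c', d'⟩ := hP
  have s : SES (LinearMap.inl R A P) (LinearMap.snd R A P) :=
    { inj := LinearMap.inl_injective
      surj := LinearMap.snd_surjective
      ex := by
        rintro ⟨x, y⟩
        constructor
        · rintro (rfl : y = 0)
          exact ⟨x, rfl⟩
        · rintro ⟨z, hz⟩
          exact (congrArg Prod.snd hz).symm }
  have dd := s.dual (fun h => ⟨h ∘ₗ LinearMap.fst R A P, by ext; rfl⟩)
  refine ⟨inferInstance, ⟨?_, ?_⟩, acy_mid s.se c c', acy_mid dd.se d' d⟩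
  · rintro ⟨x, y⟩ ⟨x', y'⟩ h
    refine Prod.ext (b.1 ?_) (b'.1 ?_)
    · ext φ
      exact LinearMap.congr_fun h (φ ∘ₗ LinearMap.fst R A P)
    · ext φ
      exact LinearMap.congr_fun h (φ ∘ₗ LinearMap.snd R A P)
  · intro t
    obtain ⟨x, hx⟩ := b.2 ((LinearMap.fst R A P).dualMap.dualMap t)
    obtain ⟨y, hy⟩ := b'.2 ((LinearMap.snd R A P).dualMap.dualMap t)
    refine ⟨(x, y), ?_⟩
    ext φ
    have h1 := LinearMap.congr_fun hx (φ ∘ₗ LinearMap.inl R A P)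
    have h2 := LinearMap.congr_fun hy (φ ∘ₗ LinearMap.inr R A P)
    change φ (x, 0) = t ((φ ∘ₗ LinearMap.inl R A P) ∘ₗ LinearMap.fst R A P) at h1
    change φ (0, y) = t ((φ ∘ₗ LinearMap.inr R A P) ∘ₗ LinearMap.snd R A P) at h2
    change φ (x, y) = t φ
    rw [show ((x, y) : A × P) = (x, 0) + (0, y) by simp, map_add, h1, h2, ← map_add]
    congr 1
    refine LinearMap.ext (fun z => ?_)
    change φ (z.1, 0) + φ (0, z.2) = φ z
    rw [← map_add]
    congr 1
    simp

lemma gle_equiv : ∀ (n : ℕ) {A B : Type u} [AddCommGroup A] [Module R A] [AddCommGroup B]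
    [Module R B] (_ : A ≃ₗ[R] B) (_ : GDimLE R n (ModuleCat.of R A)),
    GDimLE R n (ModuleCat.of R B)
  | 0, A, B, _, _, _, _, e, h => gz_of_equiv e h
  | n + 1, A, B, _, _, _, _, e, h => by
    obtain ⟨G, f, h1, h2, h3⟩ := h
    refine ⟨G, e.toLinearMap ∘ₗ f, h1, e.surjective.comp h2, ?_⟩
    refine gle_equiv n (LinearEquiv.ofEq _ _ ?_) h3
    exact (LinearEquiv.ker_comp e f).symm

lemma gle_prod {P : Type u} [AddCommGroup P] [Module R P]
    [Module.Finite R P] [Module.Projective R P] : ∀ (n : ℕ) {A : Type u} [AddCommGroup A]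
    [Module R A] (_ : GDimLE R n (ModuleCat.of R A)), GDimLE R n (ModuleCat.of R (A × P))
  | 0, A, _, _, h => gz_prod h
  | n + 1, A, _, _, h => by
    obtain ⟨G, f, h1, h2, h3⟩ := h
    refine ⟨ModuleCat.of R (G × P), LinearMap.prodMap f LinearMap.id, gz_prod h1, ?_, ?_⟩
    · exact Function.Surjective.prodMap h2 Function.surjective_id
    · refine gle_equiv n (LinearEquiv.ofBijective
        (LinearMap.codRestrict _ (LinearMap.inl R G P ∘ₗ (LinearMap.ker f).subtype) ?_) ⟨?_, ?_⟩) h3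
      · rintro ⟨x, hx⟩
        exact Prod.ext hx rfl
      · intro x y hxy
        apply Subtype.ext
        exact congrArg (fun t => t.1.1) hxy
      · rintro ⟨⟨x, y⟩, hx⟩
        have hy : y = 0 := congrArg Prod.snd hx
        have hx' : f x = 0 := congrArg Prod.fst hx
        subst hy
        exact ⟨⟨x, hx'⟩, rfl⟩

lemma Chain.ses (Q : Chain R) (j : ℕ) : SES (Q.ι j).hom (Q.π j).hom := by
  have h := Q.se j
  refine ⟨(ModuleCat.mono_iff_injective _).1 h.mono_f, (ModuleCat.epi_iff_surjective _).1 h.epi_g, ?_⟩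
  intro x
  constructor
  · exact (ShortComplex.moduleCat_exact_iff _).1 h.exact x
  · rintro ⟨y, rfl⟩
    exact congrArg (fun t => t.hom y) (Q.w j)

variable [IsNoetherianRing R]

lemma gle_ker : ∀ (n : ℕ) {A W G : Type u} [AddCommGroup A] [Module R A] [AddCommGroup W]
    [Module R W] [AddCommGroup G] [Module R G] {f : A →ₗ[R] W} {g : W →ₗ[R] G} (_ : SES f g)
    (_ : GDimLE R n (ModuleCat.of R W)) (_ : IsGDimZero R G), GDimLE R n (ModuleCat.of R A)
  | 0, A, W, G, _, _, _, _, _, _, f, g, s, h, h' => s.gz_left h h'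
  | n + 1, A, W, G, _, _, _, _, _, _, f, g, s, h, h' => by
    obtain ⟨H, p, h1, h2, h3⟩ := h
    let K := LinearMap.ker (g ∘ₗ p)
    have s1 : SES K.subtype (g ∘ₗ p) :=
      { inj := Subtype.val_injective
        surj := s.surj.comp h2
        ex := fun x => ⟨fun hx => ⟨⟨x, hx⟩, rfl⟩, by rintro ⟨y, rfl⟩; exact y.2⟩ }
    have hK := s1.gz_left h1 h'
    let e := LinearEquiv.ofInjective f s.inj
    have hm : ∀ x : K, (p ∘ₗ K.subtype) x ∈ LinearMap.range f := by
      rintro ⟨x, hx⟩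
      obtain ⟨y, hy⟩ := (s.ex (p x)).1 hx
      exact ⟨y, hy⟩
    let q : K →ₗ[R] A := e.symm.toLinearMap ∘ₗ LinearMap.codRestrict _ (p ∘ₗ K.subtype) hm
    have hq : ∀ x : K, f (q x) = p x := by
      intro x
      exact congrArg Subtype.val (e.apply_symm_apply ⟨p x, hm x⟩)
    refine ⟨ModuleCat.of R K, q, hK, ?_, ?_⟩
    · intro a
      obtain ⟨x, hx⟩ := h2 (f a)
      refine ⟨⟨x, ?_⟩, ?_⟩
      · change g (p x) = 0
        rw [hx, s.ex]
        exact ⟨a, rfl⟩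
      · apply s.inj
        rw [hq]
        exact hx
    · refine gle_equiv n (LinearEquiv.ofBijective
        (LinearMap.codRestrict (LinearMap.ker q) (LinearMap.codRestrict K
          (LinearMap.ker p).subtype ?_) ?_) ⟨?_, ?_⟩) h3
      · rintro ⟨x, hx⟩
        change g (p x) = 0
        rw [LinearMap.mem_ker.1 hx, map_zero]
      · rintro ⟨x, hx⟩
        apply s.inj
        refine (hq _).trans (Eq.trans ?_ (map_zero f).symm)
        exact hx
      · intro x y hxy
        apply Subtype.ext
        exact congrArg (fun t => t.1.1) hxy
      · rintro ⟨⟨x, hx⟩, hx'⟩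
        refine ⟨⟨x, ?_⟩, rfl⟩
        have := hq ⟨x, hx⟩
        rw [LinearMap.mem_ker.1 hx', map_zero] at this
        exact this.symm

lemma gle_syz (n : ℕ) {A P M : Type u} [AddCommGroup A] [Module R A] [AddCommGroup P]
    [Module R P] [AddCommGroup M] [Module R M] {f : A →ₗ[R] P} {g : P →ₗ[R] M} (s : SES f g)
    [Module.Finite R P] [Module.Projective R P]
    (h : GDimLE R (n + 1) (ModuleCat.of R M)) : GDimLE R n (ModuleCat.of R A) := by
  obtain ⟨G, p, h1, h2, h3⟩ := h
  obtain ⟨l, hl⟩ := Module.projective_lifting_property p g h2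
  have hl : ∀ x, p (l x) = g x := fun x => LinearMap.congr_fun hl x
  let W := LinearMap.ker p × P
  have hW : GDimLE R n (ModuleCat.of R W) := gle_prod n h3
  have hz : ∀ a, g (f a) = 0 := fun a => (s.ex _).2 ⟨a, rfl⟩
  let α : A →ₗ[R] W := LinearMap.prod (LinearMap.codRestrict _ (-(l ∘ₗ f)) (by
    intro a
    change p (-(l (f a))) = 0
    rw [map_neg, hl, hz, neg_zero])) f
  let β : W →ₗ[R] G := LinearMap.coprod (LinearMap.ker p).subtype l
  have s2 : SES α β :=
    { inj := fun x y hxy => s.inj (congrArg Prod.snd hxy)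
      surj := fun x => by
        obtain ⟨y, hy⟩ := s.surj (p x)
        refine ⟨(⟨x - l y, ?_⟩, y), ?_⟩
        · rw [LinearMap.mem_ker, map_sub, hl, hy, sub_self]
        · exact sub_add_cancel _ _
      ex := by
        rintro ⟨⟨x, hx⟩, y⟩
        have hx : p x = 0 := hx
        constructor
        · intro h
          have h : x + l y = 0 := h
          have hy : g y = 0 := by
            have := congrArg p h
            rwa [map_add, hx, zero_add, hl, map_zero] at this
          obtain ⟨a, rfl⟩ := (s.ex y).1 hy
          refine ⟨a, Prod.ext (Subtype.ext ?_) rfl⟩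
          exact (eq_neg_of_add_eq_zero_left h).symm
        · rintro ⟨a, ha⟩
          have h2 : f a = y := congrArg Prod.snd ha
          have h1 : -(l (f a)) = x := congrArg (fun t => t.1.1) ha
          change x + l y = 0
          rw [← h1, h2, neg_add_cancel] }
  exact gle_ker n s2 hW h1

lemma gz_syz {A P M : Type u} [AddCommGroup A] [Module R A] [AddCommGroup P]
    [Module R P] [AddCommGroup M] [Module R M] {f : A →ₗ[R] P} {g : P →ₗ[R] M} (s : SES f g)
    [Module.Finite R P] [Module.Projective R P]
    (h : IsGDimZero R M) : IsGDimZero R A := s.gz_left gz_proj h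

lemma Chain.gle (Q : Chain R) (hf : ∀ j, Module.Finite R (Q.P j)) (n : ℕ) : ∀ (j k : ℕ),
    j + k = n → GDimLE R n (Q.X 0) → GDimLE R k (Q.X j)
  | 0, k, h, h0 => by
    obtain rfl : k = n := by omega
    exact h0
  | j + 1, k, h, h0 => by
    have := Chain.gle Q hf n j (k + 1) (by omega) h0
    have := hf j
    have := Q.proj j
    exact gle_syz k (Q.ses j) (by assumption)

lemma Chain.gz (Q : Chain R) (hf : ∀ j, Module.Finite R (Q.P j)) (n : ℕ)
    (h0 : GDimLE R n (Q.X 0)) (k : ℕ) : IsGDimZero R (Q.X (n + k)) := by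
  induction k with
  | zero => exact Q.gle hf n n 0 rfl h0
  | succ k ih =>
    have := hf (n + k)
    have := Q.proj (n + k)
    exact gz_syz (Q.ses (n + k)) ih

end
end

noncomputable section

open Limits

section
variable {R : Type u} [CommRing R]

def MinRes.pre {M : Type u} [AddCommGroup M] [Module R M] (F : MinRes R M) :
    PreRes R (ModuleCat.of R M) where
  P := F.P
  proj := F.projective
  d := F.d
  ε := F.ε
  surj := F.surj
  exact0 := F.exact0
  exact := F.exact

lemma Chain.zEquiv (Q : Chain R) (hf : ∀ j, Module.Finite R (Q.P j)) (j : ℕ) :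
    ∃ e : Module.Dual R (Q.X j) ≃ₗ[R] (Q.dual hf).Z j,
      ∀ φ, (e φ).1 = (Q.π j).hom.dualMap φ := by
  have s := Q.ses j
  have s' := Q.ses (j + 1)
  have hd : ∀ ψ : Module.Dual R (Q.P j), (Q.d j).dualMap ψ = 
      (Q.π (j + 1)).hom.dualMap ((Q.ι j).hom.dualMap ψ) := by
    intro ψ
    have := congrArg ModuleCat.Hom.hom (Q.fac j)
    ext x
    exact congrArg ψ (LinearMap.congr_fun this x).symm
  refine ⟨LinearEquiv.ofBijective (LinearMap.codRestrict _ (Q.π j).hom.dualMap ?_) ⟨?_, ?_⟩, ?_⟩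
  · intro φ
    refine (hd _).trans ?_
    rw [(s.dex _).2 ⟨φ, rfl⟩, map_zero]
    rfl
  · intro x y hxy
    exact LinearMap.dualMap_injective_of_surjective s.surj (congrArg Subtype.val hxy)
  · rintro ⟨ψ, hψ⟩
    have h0 : (Q.ι j).hom.dualMap ψ = 0 := by
      apply LinearMap.dualMap_injective_of_surjective s'.surj
      rw [map_zero, ← hd]
      exact hψ
    obtain ⟨φ, hφ⟩ := (s.dex _).1 h0
    exact ⟨φ, Subtype.ext hφ⟩
  · intro φ
    rfl

lemma Chain.exQ (Q : Chain R) (hf : ∀ j, Module.Finite R (Q.P j)) (m : ℕ) :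
    ∃ q : (Q.dual hf).Z (m + 1) →ₗ[R] (extM R (m + 1) (Q.X 0) R), Function.Surjective q ∧
      ∀ z, q z = 0 ↔ z.1 ∈ LinearMap.range ((Q.dual hf).d m) := by
  let N := ModuleCat.of R R
  obtain ⟨e, he⟩ := Q.zEquiv hf (m + 1)
  obtain ⟨a⟩ := extIso (m + 1) (Q.X 0) N
  obtain ⟨b⟩ := (extDelta N).shiftChain Q m 0 0 m (by omega)
  rw [show 0 + 1 + m = m + 1 by omega] at b
  obtain ⟨δ, w, hm, hex⟩ := (extDelta N).one _ (Q.se m) ((extDelta N).proj _ (Q.proj m) _)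
  have hsur : Function.Surjective δ.unop.hom :=
    (ModuleCat.epi_iff_surjective _).1 (inferInstance : Epi δ.unop)
  rw [← ShortComplex.exact_unop_iff, ShortComplex.moduleCat_exact_iff] at hex
  let g : ((extDelta N).T (0 + 1) (Q.X m)).unop ≃ₗ[R] (extM R (m + 1) (Q.X 0) R) :=
    (b.unop ≪≫ a.symm).toLinearEquiv
  let t : (Q.dual hf).Z (m + 1) ≃ₗ[R] (Q.X (m + 1) ⟶ N) :=
    e.symm.trans (ModuleCat.homLinearEquiv (S := R) (M := Q.X (m + 1)) (N := N)).symm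
  refine ⟨g.toLinearMap ∘ₗ δ.unop.hom ∘ₗ t.toLinearMap,
    g.surjective.comp (hsur.comp t.surjective), ?_⟩
  intro z
  obtain ⟨φ, rfl⟩ := e.surjective z
  have h1 : g (δ.unop.hom (t (e φ))) = 0 ↔ δ.unop.hom (t (e φ)) = 0 := g.map_eq_zero_iff
  have h2 : t (e φ) = ModuleCat.ofHom φ := by
    change ModuleCat.ofHom (e.symm (e φ)) = _
    rw [e.symm_apply_apply]
  rw [h2] at h1
  have h1' : (g.toLinearMap ∘ₗ δ.unop.hom ∘ₗ t.toLinearMap) (e φ) = 0 ↔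
      δ.unop.hom (ModuleCat.ofHom φ) = 0 := by
    rw [← h1, ← h2]; rfl
  rw [h1', he]
  have hfac := congrArg ModuleCat.Hom.hom (Q.fac m)
  constructor
  · intro h
    obtain ⟨ψ, hψ⟩ := hex (ModuleCat.ofHom φ) h
    have hψ' : ψ.hom ∘ₗ (Q.ι m).hom = φ := congrArg ModuleCat.Hom.hom hψ
    refine ⟨ψ.hom, ?_⟩
    subst hψ'
    refine LinearMap.ext (fun x => ?_)
    exact congrArg ψ.hom (LinearMap.congr_fun hfac x).symm
  · rintro ⟨(ψ : Module.Dual R (Q.P m)), hψ⟩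
    have : (Q.ι m).hom.dualMap ψ = φ := by
      apply LinearMap.dualMap_injective_of_surjective (Q.ses (m + 1)).surj
      rw [← hψ]
      refine LinearMap.ext (fun x => ?_)
      exact congrArg ψ (LinearMap.congr_fun hfac x)
    subst this
    have hw := congrArg (fun k => k.unop.hom (ModuleCat.ofHom ψ)) w
    exact hw

variable [IsNoetherianRing R]

lemma Chain.main (Q : Chain R) (hf : ∀ j, Module.Finite R (Q.P j)) (m : ℕ)
    (hg : GDimLE R (m + 1) (Q.X 0))
    (hlt : ∀ j, j < m → IsZero ((extDelta (ModuleCat.of R R)).T (j + 1) (Q.X 0)))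
    (N : ModuleCat.{u} R) (hN : HasFiniteFlatDim R N ∨ HasFiniteInjDim R N) :
    Nonempty (MainData (Q.dual hf) m (ModuleCat.of R (extM R (m + 1) (Q.X 0) R)) (torDelta N)) ∧
    Nonempty (MainData (Q.dual hf) m (ModuleCat.of R (extM R (m + 1) (Q.X 0) R)) (extDelta N)) := by
  let C := Q.dual hf
  have hgz : ∀ j, m < j → IsGDimZero R (Q.X j) := by
    intro j hj
    have := Q.gz hf (m + 1) hg (j - (m + 1))
    rwa [show m + 1 + (j - (m + 1)) = j by omega] at this
  have lt : ∀ j, j < m → C.EA j := fun j hj => Q.EA_of hf j (hlt j hj)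
  have gt : ∀ j, m < j → C.EA j := by
    intro j hj
    refine Q.EA_of hf j ?_
    obtain ⟨k, rfl⟩ : ∃ k, j = k + (m + 1) := ⟨j - (m + 1), by omega⟩
    obtain ⟨e⟩ := (extDelta (ModuleCat.of R R)).shiftChain Q (m + 1) k 0 (m + 1) (by omega)
    rw [show k + 1 + (m + 1) = k + (m + 1) + 1 by omega] at e
    exact (((gz_iff _).1 (hgz (m + 1) (by omega))).2.2.1 k).of_iso e
  have acyB : ∀ j, m < j → Acy (C.B j) := by
    intro j hj
    obtain ⟨e, -⟩ := Q.zEquiv hf (j + 1)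
    have heq : LinearMap.ker (C.d (j + 1)) = LinearMap.range (C.d j) := by
      refine le_antisymm (gt j hj) ?_
      rintro _ ⟨x, rfl⟩
      exact LinearMap.congr_fun (C.dd j) x
    exact acy_equiv (e.trans (LinearEquiv.ofEq _ _ heq))
      ((gz_iff _).1 (hgz (j + 1) (by omega))).2.2.2
  have finB : ∀ j, Module.Finite R (C.B j) := by
    intro j
    have := hf j
    have := Q.proj j
    have : Module.Finite R (C.D j) := inferInstanceAs (Module.Finite R (Module.Dual R (Q.P j)))
    exact inferInstanceAs (Module.Finite R (LinearMap.range (C.d j)))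
  have both := fun j (hj : m < j) => vanBoth N hN C j (fun t ht => gt t (by omega)) (finB j) (acyB j hj)
  obtain ⟨q, hq1, hq2⟩ := Q.exQ hf m
  have wq : C.inc m ≫ ModuleCat.ofHom q = 0 := by
    ext x
    exact (hq2 _).2 x.2
  have se : (ShortComplex.mk _ _ wq).ShortExact := by
    refine ModuleCat.shortComplex_shortExact _ ?_ ?_ hq1
    · intro z
      constructor
      · intro hz
        exact ⟨⟨z.1, (hq2 z).1 hz⟩, rfl⟩
      · rintro ⟨y, rfl⟩
        exact (hq2 _).2 y.2
    · intro x y hxy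
      have h : (C.inc m).hom x = (C.inc m).hom y := hxy
      exact Subtype.ext (congrArg (fun t : C.Z (m + 1) => t.1) h)
  refine ⟨⟨⟨ModuleCat.ofHom q, wq, se, lt, gt, ?_, ?_⟩⟩, ⟨⟨ModuleCat.ofHom q, wq, se, lt, gt, ?_, ?_⟩⟩⟩
  · intro i
    obtain ⟨e⟩ := (torDelta N).shift _ (C.zses (m + 1)) i ((torDelta N).proj _ (C.proj _) _)
      ((torDelta N).proj _ (C.proj _) _)
    exact (both (m + 1) (by omega) (i + 1)).1.of_iso e.symm
  · exact fun i j hj => (both j hj i).1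
  · intro i
    obtain ⟨e⟩ := (extDelta N).shift _ (C.zses (m + 1)) i ((extDelta N).proj _ (C.proj _) _)
      ((extDelta N).proj _ (C.proj _) _)
    exact (both (m + 1) (by omega) (i + 1)).2.of_iso e.symm
  · exact fun i j hj => (both j hj i).2

lemma gdim_le (M : Type u) [AddCommGroup M] [Module R M] (n : ℕ) (h : GDim R M = (n : ℕ∞)) :
    GDimLE R n (ModuleCat.of R M) := by
  unfold GDim at h
  have hne : {n : ℕ∞ | ∃ k : ℕ, n = k ∧ GDimLE R k (ModuleCat.of R M)}.Nonempty := by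
    by_contra hc
    rw [Set.not_nonempty_iff_eq_empty] at hc
    rw [hc, sInf_empty] at h
    exact ENat.top_ne_natCast n h
  have := csInf_mem hne
  rw [h] at this
  obtain ⟨k, hk, hk'⟩ := this
  rw [Nat.cast_inj] at hk
  rwa [hk]

lemma rgr_spec (M : Type u) [AddCommGroup M] [Module R M] (n : ℕ) (h : rgr R M = (n : ℕ∞)) :
    0 < n ∧ ∀ j, 0 < j → j < n → Subsingleton (extM R j M R) := by
  unfold rgr at h
  constructor
  · have hne : {n : ℕ∞ | ∃ k : ℕ, n = k ∧ 0 < k ∧ ¬ Subsingleton (extM R k M R)}.Nonempty := by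
      by_contra hc
      rw [Set.not_nonempty_iff_eq_empty] at hc
      rw [hc, sInf_empty] at h
      exact ENat.top_ne_natCast n h
    have := csInf_mem hne
    rw [h] at this
    obtain ⟨k, hk, hk', -⟩ := this
    rw [Nat.cast_inj] at hk
    omega
  · intro j hj hjn
    by_contra hc
    have h1 : sInf {n : ℕ∞ | ∃ k : ℕ, n = k ∧ 0 < k ∧ ¬ Subsingleton (extM R k M R)} ≤ (j : ℕ∞) :=
      sInf_le ⟨j, rfl, hj, hc⟩
    rw [h, Nat.cast_le] at h1
    omega

end

end

section Statements

variable (R : Type u) [CommRing R] [IsNoetherianRing R]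

theorem stmt13 (M : Type u) [AddCommGroup M] [Module R M] [Module.Finite R M]
    (F : MinRes R M) (n : ℕ) (hG : GDim R M = (n : ℕ∞)) (hred : rgr R M = (n : ℕ∞))
    (N : Type u) [AddCommGroup N] [Module R N] [Module.Finite R N]
    (hN : HasFiniteFlatDim R N ∨ HasFiniteInjDim R N) :
    (∀ i : ℕ, i < n →
      Nonempty (torM R i (extM R n M R) N ≃ₗ[R] extM R (n - i) M N)) ∧
    (∀ i : ℕ, n < i →
      Nonempty (torM R i (extM R n M R) N ≃ₗ[R] torM R (i - n) F.lambdaMod N)) ∧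
    (∀ i : ℕ, i < n →
      Nonempty (extM R i (extM R n M R) N ≃ₗ[R] torM R (n - i) M N)) ∧
    (∀ i : ℕ, n < i →
      Nonempty (extM R i (extM R n M R) N ≃ₗ[R] extM R (i - n) F.lambdaMod N)) := by
  obtain ⟨hn, hlt⟩ := rgr_spec M n hred
  obtain ⟨m, rfl⟩ : ∃ m, n = m + 1 := ⟨n - 1, by omega⟩
  let Q : Chain R := F.pre.chain
  let hf : ∀ j, Module.Finite R (Q.P j) := F.finite
  obtain ⟨⟨D₁⟩, ⟨D₂⟩⟩ := Q.main hf m (gdim_le M _ hG)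
    (fun j hj => (extM_iff (j + 1) M R).1 (hlt (j + 1) (by omega) (by omega))) (ModuleCat.of R N) hN
  let N' := ModuleCat.of R N
  let E := ModuleCat.of R (extM R (m + 1) M R)
  refine ⟨?_, ?_, ?_, ?_⟩
  · intro i hi
    obtain ⟨j, rfl⟩ : ∃ j, m = i + j := ⟨m - i, by omega⟩
    rw [show i + j + 1 - i = j + 1 by omega]
    obtain ⟨a⟩ := torIso i E N'
    obtain ⟨b⟩ := D₁.small i j rfl
    obtain ⟨c⟩ := cross1 Q hf N' j
    obtain ⟨d⟩ := extIso (j + 1) (Q.X 0) N'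
    exact ⟨(a ≪≫ b ≪≫ c.unop ≪≫ d.symm).toLinearEquiv⟩
  · intro i hi
    obtain ⟨k, rfl⟩ : ∃ k, i = k + 1 + (m + 1) := ⟨i - (m + 1) - 1, by omega⟩
    rw [show k + 1 + (m + 1) - (m + 1) = k + 1 by omega]
    obtain ⟨a⟩ := torIso (k + 1 + (m + 1)) E N'
    obtain ⟨b⟩ := D₁.big k
    obtain ⟨c⟩ := torIso (k + 1) ((Q.dual hf).B 0) N'
    exact ⟨(a ≪≫ b ≪≫ c.symm).toLinearEquiv⟩
  · intro i hi
    obtain ⟨j, rfl⟩ : ∃ j, m = i + j := ⟨m - i, by omega⟩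
    rw [show i + j + 1 - i = j + 1 by omega]
    obtain ⟨a⟩ := extIso i E N'
    obtain ⟨b⟩ := D₂.small i j rfl
    obtain ⟨c⟩ := cross2 Q hf N' j
    obtain ⟨d⟩ := torIso (j + 1) (Q.X 0) N'
    exact ⟨(a ≪≫ (b ≪≫ c).unop.symm ≪≫ d.symm).toLinearEquiv⟩
  · intro i hi
    obtain ⟨k, rfl⟩ : ∃ k, i = k + 1 + (m + 1) := ⟨i - (m + 1) - 1, by omega⟩
    rw [show k + 1 + (m + 1) - (m + 1) = k + 1 by omega]
    obtain ⟨a⟩ := extIso (k + 1 + (m + 1)) E N'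
    obtain ⟨b⟩ := D₂.big k
    obtain ⟨c⟩ := extIso (k + 1) ((Q.dual hf).B 0) N'
    exact ⟨(a ≪≫ b.unop.symm ≪≫ c.symm).toLinearEquiv⟩

end Statements
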